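/- arXiv:1604.01283 — 4 statements merged into one kernel-verified Lean document; each statement's English description precedes it below -/
import Mathlib

section
/- Let G be a finite group and k a field. Then there exists a positive integer r such that for any two modules M and N over the group algebra kG, if Ext^n_{kG}(M, N) = 0 for r consecutive positive values of n, then Ext^n_{kG}(M, N) = 0 for all n > 0. -/
/-!
Let `p` be the characteristic exponent of `k` and `S` the disjoint union of the `G`-sets `G ⧸ ⟨h⟩`,
for `h` of order `p`. Twisting by cocycles makes `G` act on `Ω = (S → ZMod p)` by permuting the
coordinates and translating them, in such a way that no `g ≠ 1` of order `p` has a fixed point. All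
stabilizers thus have order invertible in `k`, so that the modules of functions `Ω → N` are
injective. The tensor product over `S` of the periodic resolutions of the trivial `ZMod p`-module
yields a resolution of `N` with underlying module `k[X_S] ⊗ Λ(S) ⊗ (Ω → N)`, on which the symmetric
polynomials act by chain maps.

If `n = |S|`, the elementary symmetric polynomials `e₁, …, eₙ` form a regular sequence whose
quotient vanishes in high degrees. Multiplication by `eⱼ` raises degrees by `2j`, so the long exact
sequence of the quotient by `eⱼ` propagates vanishing of cohomology: `2j` consecutive zeros modulo
`(e₁, …, eⱼ₋₁)` give one zero modulo `(e₁, …, eⱼ)`, and once the cohomology modulo `(e₁, …, eⱼ)` is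
zero, that modulo `(e₁, …, eⱼ₋₁)` is periodic. Descending from `j = n` shows that `n² + 1`
consecutive zeros of `Extⁱ(M, N)` in high degrees force all others in high degrees to vanish. Since
`M` embeds into a projective module, dimension shifting brings every degree into that range.
-/

open CategoryTheory
open scoped MonoidAlgebra

universe w v

/-- A cochain complex of modules together with a sequence `c 0, …, c (n - 1)` of chain
endomorphisms that is regular, in the sense that `c j` is injective modulo the images `W j` of its
predecessors, and whose quotient by the whole sequence vanishes in degrees above `B`. The complex
is encoded as a single module `A` with the submodules `degree m` of `m`-cochains; `c j` raises
degrees by `δ j + 1`. -/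
structure RegularSequenceComplex (R A : Type*) [Ring R] [AddCommGroup A] [Module R A]
    (n B : ℕ) (δ : ℕ → ℕ) where
  degree : ℕ → Submodule R A
  d : A →ₗ[R] A
  c : ℕ → A →ₗ[R] A
  W : ℕ → Submodule R A
  d_d : ∀ u, d (d u) = 0
  c_d : ∀ j u, c j (d u) = d (c j u)
  d_mem_degree : ∀ {m u}, u ∈ degree m → d u ∈ degree (m + 1)
  c_mem_degree : ∀ j {m u}, u ∈ degree m → c j u ∈ degree (m + (δ j + 1))
  W_le_succ : ∀ j, W j ≤ W (j + 1)
  d_mem_W : ∀ {j u}, u ∈ W j → d u ∈ W j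
  c_mem_W : ∀ i {j u}, u ∈ W j → c i u ∈ W j
  c_mem_W_succ : ∀ j u, c j u ∈ W (j + 1)
  exists_sub_mem_W : ∀ {j m u}, u ∈ degree (m + (δ j + 1)) → u ∈ W (j + 1) →
    ∃ v ∈ degree m, u - c j v ∈ W j
  mem_W_of_c_mem : ∀ {j m u}, j < n → u ∈ degree m → c j u ∈ W j → u ∈ W j
  degree_le_W : ∀ {m}, B < m → degree m ≤ W n

namespace RegularSequenceComplex

variable {R A : Type*} [Ring R] [AddCommGroup A] [Module R A] {n B : ℕ} {δ : ℕ → ℕ}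
  (K : RegularSequenceComplex R A n B δ)

/-- Vanishing of the cohomology of the quotient complex modulo `W j` in degree `m + 1`. -/
def AcyclicMod (j m : ℕ) : Prop :=
  ∀ z ∈ K.degree (m + 1), K.d z ∈ K.W j → ∃ y ∈ K.degree m, z - K.d y ∈ K.W j

variable {K} {j m : ℕ}

theorem acyclicMod_of_lt (hm : B ≤ m) : K.AcyclicMod n m := fun z hz _ ↦
  ⟨0, zero_mem _, by simpa using K.degree_le_W (Nat.lt_succ_of_le hm) hz⟩

theorem d_mem_W_of_sub_c_mem {u w : A} (hj : j < n) (hw : w ∈ K.degree m)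
    (hu : K.d u ∈ K.W j) (huw : u - K.c j w ∈ K.W j) : K.d w ∈ K.W j := by
  refine K.mem_W_of_c_mem hj (K.d_mem_degree hw) ?_
  have h := sub_mem hu (K.d_mem_W huw)
  rwa [← map_sub, sub_sub_cancel, ← K.c_d] at h

theorem acyclicMod_succ (hj : j < n) (h₁ : K.AcyclicMod j m) (h₂ : K.AcyclicMod j (m + δ j)) :
    K.AcyclicMod (j + 1) (m + δ j) := by
  intro z hz hdz
  have hdz' : K.d z ∈ K.degree (m + 1 + (δ j + 1)) := by
    convert K.d_mem_degree hz using 2; omega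
  obtain ⟨w, hw, hzw⟩ := K.exists_sub_mem_W hdz' hdz
  obtain ⟨y, hy, hwy⟩ := h₁ w hw
    (d_mem_W_of_sub_c_mem hj hw (by rw [K.d_d]; exact zero_mem _) hzw)
  obtain ⟨t, ht, hzt⟩ := h₂ (z - K.c j y) (sub_mem hz (K.c_mem_degree j hy)) <| by
    have h := add_mem hzw (K.c_mem_W j hwy)
    rwa [map_sub, sub_add_sub_cancel, K.c_d, ← map_sub] at h
  refine ⟨t, ht, ?_⟩
  have h := add_mem (K.W_le_succ j hzt) (K.c_mem_W_succ j y)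
  rwa [sub_right_comm, sub_add_cancel] at h

theorem acyclicMod_add (hj : j < n) (h₁ : K.AcyclicMod (j + 1) (m + (δ j + 1)))
    (h₂ : K.AcyclicMod j m) : K.AcyclicMod j (m + (δ j + 1)) := by
  intro z hz hdz
  obtain ⟨s, hs, hzs⟩ := h₁ z hz (K.W_le_succ j hdz)
  have hzs' : z - K.d s ∈ K.degree (m + 1 + (δ j + 1)) := by
    convert sub_mem hz (K.d_mem_degree hs) using 2; omega
  obtain ⟨w, hw, hzw⟩ := K.exists_sub_mem_W hzs' hzs
  obtain ⟨y, hy, hwy⟩ := h₂ w hw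
    (d_mem_W_of_sub_c_mem hj hw (by rwa [map_sub, K.d_d, sub_zero]) hzw)
  refine ⟨s + K.c j y, add_mem hs (K.c_mem_degree j hy), ?_⟩
  have h := add_mem hzw (K.c_mem_W j hwy)
  rwa [map_sub, sub_add_sub_cancel, K.c_d, sub_sub, ← map_add] at h

theorem acyclicMod_of_add (hj : j < n) (h₁ : K.AcyclicMod (j + 1) (m + δ j))
    (h₂ : K.AcyclicMod j (m + (δ j + 1))) : K.AcyclicMod j m := by
  intro z hz hdz
  have hcz : K.c j z ∈ K.degree (m + (δ j + 1) + 1) := by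
    convert K.c_mem_degree j hz using 2; omega
  obtain ⟨y, hy, hzy⟩ := h₂ _ hcz (by rw [← K.c_d]; exact K.c_mem_W j hdz)
  obtain ⟨s, hs, hys⟩ := h₁ y hy <| by
    simpa using sub_mem (K.c_mem_W_succ j z) (K.W_le_succ j hzy)
  have hys' : y - K.d s ∈ K.degree (m + (δ j + 1)) := sub_mem hy (K.d_mem_degree hs)
  obtain ⟨w, hw, hyw⟩ := K.exists_sub_mem_W hys' hys
  refine ⟨w, hw, K.mem_W_of_c_mem hj (sub_mem hz (K.d_mem_degree hw)) ?_⟩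
  have h := add_mem hzy (K.d_mem_W hyw)
  simpa [K.d_d, K.c_d] using h

theorem acyclicMod_of_periodic {a : ℕ} (ha : B ≤ a) (hj : j < n)
    (hsucc : ∀ m, B ≤ m → K.AcyclicMod (j + 1) m)
    (hrange : ∀ i ≤ δ j, K.AcyclicMod j (a + i)) (hm : B ≤ m) : K.AcyclicMod j m := by
  have upward : ∀ i, K.AcyclicMod j (a + i) := by
    intro i
    induction i using Nat.strong_induction_on with
    | _ i ih =>
      rcases le_or_gt i (δ j) with hi | hi
      · exact hrange i hi
      · obtain ⟨l, rfl⟩ := Nat.exists_eq_add_of_le' (Nat.succ_le_of_lt hi)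
        rw [← add_assoc]
        exact acyclicMod_add hj (hsucc _ (by omega)) (ih l (by omega))
  have downward : ∀ s m, B ≤ m → a ≤ m + s → K.AcyclicMod j m := by
    intro s
    induction s with
    | zero =>
      intro m _ ham
      obtain ⟨i, rfl⟩ := Nat.exists_eq_add_of_le ham
      exact upward i
    | succ s ih =>
      intro m hm ham
      exact acyclicMod_of_add hj (hsucc _ (by omega)) (ih _ (by omega) (by omega))
  exact downward a m hm (by omega)

theorem acyclicMod_of_consecutive {t a : ℕ} (hjt : j + t = n) (ha : B ≤ a)
    (h : ∀ i ≤ ∑ l ∈ Finset.range t, δ (j + l), K.AcyclicMod j (a + i)) (hm : B ≤ m) :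
    K.AcyclicMod j m := by
  induction t generalizing j a m with
  | zero =>
    obtain rfl : j = n := hjt
    exact acyclicMod_of_lt hm
  | succ t ih =>
    have hj : j < n := by omega
    rw [Finset.sum_range_succ'] at h
    refine acyclicMod_of_periodic ha hj (fun m hm ↦ ?_)
      (fun i hi ↦ h i (by simp only [add_zero]; omega)) hm
    refine ih (a := a + δ j) (by omega) (by omega) (fun i hi ↦ ?_) hm
    simp only [add_assoc, add_comm 1] at hi
    rw [add_right_comm]
    exact acyclicMod_succ hj (h i (by simp; omega))
      (by simpa [add_assoc] using h (i + δ j) (by simpa))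

end RegularSequenceComplex

section SymmetricRegularSequence

open MvPolynomial

attribute [local instance] MvPolynomial.gradedAlgebra

variable {σ R : Type*} [CommRing R]

theorem homogeneousComponent_mul_of_le {p : MvPolynomial σ R} {d m : ℕ} (hp : p.IsHomogeneous d)
    (hdm : d ≤ m) (q : MvPolynomial σ R) :
    homogeneousComponent m (p * q) = p * homogeneousComponent (m - d) q := by
  rw [← decomposition.decompose'_apply, ← decomposition.decompose'_apply]
  exact DirectSum.coe_decompose_mul_of_left_mem_of_le (homogeneousSubmodule σ R) (b := q) hp hdm

theorem homogeneousComponent_mul_of_lt {p : MvPolynomial σ R} {d m : ℕ} (hp : p.IsHomogeneous d)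
    (hmd : m < d) (q : MvPolynomial σ R) : homogeneousComponent m (p * q) = 0 := by
  rw [← decomposition.decompose'_apply]
  exact DirectSum.coe_decompose_mul_of_left_mem_of_not_le (homogeneousSubmodule σ R) (b := q) hp
    hmd.not_ge

theorem mem_of_homogeneousComponent_mem {I : Ideal (MvPolynomial σ R)} {p : MvPolynomial σ R}
    (h : ∀ m, homogeneousComponent m p ∈ I) : p ∈ I := by
  rw [← sum_homogeneousComponent p]
  exact Ideal.sum_mem _ fun i _ ↦ h i

theorem isSMulRegular_quotient_of_sup_span_singleton {I : Ideal (MvPolynomial σ R)}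
    (hI : I.IsHomogeneous (homogeneousSubmodule σ R)) {x y : MvPolynomial σ R} {d e : ℕ}
    (hd : 0 < d) (hx : x.IsHomogeneous d) (hy : y.IsHomogeneous e)
    (hxI : IsSMulRegular (MvPolynomial σ R ⧸ I) x)
    (hyI : IsSMulRegular (MvPolynomial σ R ⧸ (I ⊔ Ideal.span {x})) y) :
    IsSMulRegular (MvPolynomial σ R ⧸ I) y := by
  rw [isSMulRegular_quotient_iff_mem_of_smul_mem] at hxI hyI ⊢
  simp only [smul_eq_mul] at hxI hyI ⊢
  have homogeneous_case : ∀ m u, u.IsHomogeneous m → y * u ∈ I → u ∈ I := by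
    intro m
    induction m using Nat.strong_induction_on with
    | _ m ih =>
      intro u hu hyu
      obtain ⟨i, hi, v, huv⟩ : ∃ i ∈ I, ∃ v, i + x * v = u := by
        obtain ⟨i, hi, z, hz, hiz⟩ := Submodule.mem_sup.1 (hyI u (Ideal.mem_sup_left hyu))
        obtain ⟨v, rfl⟩ := Ideal.mem_span_singleton.1 hz
        exact ⟨i, hi, v, hiz⟩
      have him := homogeneousComponent_mem_of_mem hI hi m
      have hum := congrArg (homogeneousComponent m) huv
      rw [map_add, homogeneousComponent_eq_self hu] at hum
      rcases lt_or_ge m d with hmd | hdm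
      · rw [homogeneousComponent_mul_of_lt hx hmd, add_zero] at hum
        rwa [← hum]
      · rw [homogeneousComponent_mul_of_le hx hdm] at hum
        rw [← hum]
        refine add_mem him (I.mul_mem_left _ (ih (m - d) (by omega) _
          (homogeneousComponent_isHomogeneous _ _) (hxI _ ?_)))
        rw [mul_left_comm, ← sub_eq_iff_eq_add'.2 hum.symm, mul_sub]
        exact sub_mem hyu (I.mul_mem_left _ him)
  intro u hu
  refine mem_of_homogeneousComponent_mem fun m ↦
    homogeneous_case m _ (homogeneousComponent_isHomogeneous _ _) ?_
  rw [← Nat.add_sub_cancel_left (n := e) (m := m),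
    ← homogeneousComponent_mul_of_le hy (Nat.le_add_right _ _)]
  exact homogeneousComponent_mem_of_mem hI hu _

theorem isSMulRegular_quotient_sup_span_singleton_swap {A : Type*} [CommRing A] {I : Ideal A}
    {x y : A} (hx : IsSMulRegular (A ⧸ I) x)
    (hy : IsSMulRegular (A ⧸ (I ⊔ Ideal.span {x})) y) :
    IsSMulRegular (A ⧸ (I ⊔ Ideal.span {y})) x := by
  rw [isSMulRegular_quotient_iff_mem_of_smul_mem] at hx hy ⊢
  simp only [smul_eq_mul, Submodule.mem_sup, Ideal.mem_span_singleton'] at hx hy ⊢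
  rintro u ⟨i, hi, _, ⟨v, rfl⟩, hu⟩
  obtain ⟨i', hi', _, ⟨w, rfl⟩, hv⟩ :=
    hy v ⟨-i, neg_mem hi, _, ⟨u, rfl⟩, by linear_combination -hu⟩
  refine ⟨u - w * y, hx _ ?_, _, ⟨w, rfl⟩, sub_add_cancel _ _⟩
  rw [show x * (u - w * y) = i + y * i' by linear_combination -hu - y * hv]
  exact add_mem hi (I.mul_mem_left _ hi')

theorem isSMulRegular_finsetProd {A M ι : Type*} [CommRing A] [AddCommGroup M] [Module A M]
    {f : ι → A} {s : Finset ι} (h : ∀ i ∈ s, IsSMulRegular M (f i)) :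
    IsSMulRegular M (∏ i ∈ s, f i) :=
  Finset.prod_induction f (IsSMulRegular M) (fun _ _ ↦ IsSMulRegular.mul) (IsSMulRegular.one M) h

theorem isSMulRegular_X_quotient_span_X {s : Set σ} {i : σ} (hi : i ∉ s) :
    IsSMulRegular (MvPolynomial σ R ⧸ Ideal.span (X '' s : Set (MvPolynomial σ R)))
      (X i : MvPolynomial σ R) := by
  rw [isSMulRegular_quotient_iff_mem_of_smul_mem]
  intro u hu
  rw [smul_eq_mul, mem_ideal_span_X_image] at hu
  rw [mem_ideal_span_X_image]
  intro m hm
  obtain ⟨l, hl, hlm⟩ := hu (Finsupp.single i 1 + m) <| by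
    rwa [mem_support_iff, coeff_X_mul, ← mem_support_iff]
  have hil : i ≠ l := by rintro rfl; exact hi hl
  exact ⟨l, hl, by simpa [Finsupp.single_apply, hil] using hlm⟩

variable (σ R) [Fintype σ]

theorem isHomogeneous_esymm (j : ℕ) : (esymm σ R j).IsHomogeneous j := by
  refine IsHomogeneous.sum _ _ _ fun T hT ↦ ?_
  simpa [(Finset.mem_powersetCard.1 hT).2] using
    IsHomogeneous.prod T (fun i ↦ (X i : MvPolynomial σ R)) (fun _ ↦ 1)
      fun i _ ↦ isHomogeneous_X R i

/-- The ideal generated by the first `j` elementary symmetric polynomials of positive degree. -/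
noncomputable def esymmIdeal (j : ℕ) : Ideal (MvPolynomial σ R) :=
  Ideal.span ((fun i ↦ esymm σ R (i + 1)) '' Set.Iio j)

variable {σ R}

theorem esymm_mem_esymmIdeal {i j : ℕ} (hij : i < j) : esymm σ R (i + 1) ∈ esymmIdeal σ R j :=
  Ideal.subset_span ⟨i, hij, rfl⟩

variable (σ R)

@[simp]
theorem esymmIdeal_zero : esymmIdeal σ R 0 = ⊥ := by simp [esymmIdeal]

theorem esymmIdeal_succ (j : ℕ) :
    esymmIdeal σ R (j + 1) = esymmIdeal σ R j ⊔ Ideal.span {esymm σ R (j + 1)} := by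
  rw [esymmIdeal, esymmIdeal, ← Ideal.span_union, ← Order.succ_eq_add_one j,
    Order.Iio_succ_eq_insert, Set.image_insert_eq, Set.union_singleton, Order.succ_eq_add_one]

theorem isHomogeneous_span_X_sup_esymmIdeal (s : Set σ) (j : ℕ) :
    (Ideal.span (X '' s) ⊔ esymmIdeal σ R j).IsHomogeneous (homogeneousSubmodule σ R) := by
  rw [esymmIdeal, ← Ideal.span_union]
  refine Ideal.homogeneous_span _ _ ?_
  rintro _ (⟨i, _, rfl⟩ | ⟨i, _, rfl⟩)
  · exact ⟨1, isHomogeneous_X R i⟩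
  · exact ⟨i + 1, isHomogeneous_esymm σ R _⟩

theorem isHomogeneous_esymmIdeal (j : ℕ) :
    (esymmIdeal σ R j).IsHomogeneous (homogeneousSubmodule σ R) := by
  simpa using isHomogeneous_span_X_sup_esymmIdeal σ R ∅ j

theorem esymm_sub_prod_mem_span_X [DecidableEq σ] (U : Finset σ) :
    esymm σ R (Fintype.card σ - U.card) - ∏ i ∈ Uᶜ, X i ∈ Ideal.span (X '' (U : Set σ)) := by
  have hU : Uᶜ ∈ Finset.powersetCard (Fintype.card σ - U.card) (Finset.univ : Finset σ) := by
    simp [Finset.mem_powersetCard, Finset.card_compl]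
  rw [esymm, ← Finset.add_sum_erase _ _ hU, add_sub_cancel_left]
  refine Ideal.sum_mem _ fun T hT ↦ ?_
  obtain ⟨hTU, hTcard⟩ := Finset.mem_erase.1 hT
  obtain ⟨i, hiT, hiU⟩ : ∃ i ∈ T, i ∈ U := by
    by_contra! hdisj
    exact hTU (Finset.eq_of_subset_of_card_le (fun i hi ↦ by simpa using hdisj i hi)
      (by rw [(Finset.mem_powersetCard.1 hTcard).2, Finset.card_compl]))
  exact Ideal.mem_of_dvd _ (Finset.dvd_prod_of_mem _ hiT) (Ideal.subset_span ⟨i, hiU, rfl⟩)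

theorem span_X_insert_sup_esymmIdeal (s : Set σ) (i : σ) (j : ℕ) :
    Ideal.span (X '' insert i s) ⊔ esymmIdeal σ R j =
      Ideal.span (X '' s) ⊔ esymmIdeal σ R j ⊔ Ideal.span {X i} := by
  rw [Set.image_insert_eq, Ideal.span_insert, sup_comm (Ideal.span {X i}), sup_right_comm]

theorem isSMulRegular_X_quotient_sup {s : Set σ} {i : σ} (hi : i ∉ s) {j : ℕ}
    (h : ∀ l < j, IsSMulRegular
      (MvPolynomial σ R ⧸ (Ideal.span (X '' insert i s) ⊔ esymmIdeal σ R l)) (esymm σ R (l + 1))) :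
    IsSMulRegular (MvPolynomial σ R ⧸ (Ideal.span (X '' s) ⊔ esymmIdeal σ R j))
      (X i : MvPolynomial σ R) := by
  induction j with
  | zero =>
    rw [esymmIdeal_zero, sup_bot_eq]
    exact isSMulRegular_X_quotient_span_X hi
  | succ j ih =>
    have hj := h j j.lt_succ_self
    rw [span_X_insert_sup_esymmIdeal] at hj
    rw [esymmIdeal_succ, ← sup_assoc]
    exact isSMulRegular_quotient_sup_span_singleton_swap (ih fun l hl ↦ h l (by omega)) hj

theorem isSMulRegular_esymm_card_sub_quotient_sup {U : Finset σ} {I : Ideal (MvPolynomial σ R)}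
    (h : ∀ i ∉ U, IsSMulRegular (MvPolynomial σ R ⧸ (Ideal.span (X '' (U : Set σ)) ⊔ I))
      (X i : MvPolynomial σ R)) :
    IsSMulRegular (MvPolynomial σ R ⧸ (Ideal.span (X '' (U : Set σ)) ⊔ I))
      (esymm σ R (Fintype.card σ - U.card)) := by
  classical
  have hprod : IsSMulRegular (MvPolynomial σ R ⧸ (Ideal.span (X '' (U : Set σ)) ⊔ I))
      (∏ i ∈ Uᶜ, X i : MvPolynomial σ R) :=
    isSMulRegular_finsetProd fun i hi ↦ h i (by simpa using hi)
  rw [isSMulRegular_quotient_iff_mem_of_smul_mem] at hprod ⊢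
  refine fun u hu ↦ hprod u ?_
  have hsub := sub_mem hu (Ideal.mul_mem_right u _
    (Ideal.mem_sup_left (esymm_sub_prod_mem_span_X σ R U)))
  rwa [smul_eq_mul, ← sub_mul, sub_sub_cancel] at hsub

/-- Killing one more variable turns the first `t` elementary symmetric polynomials of `t + 1`
variables into those of `t` variables, which are regular by induction; the last one becomes the
product of all variables, which is regular because every single variable is. -/
theorem isSMulRegular_esymm_quotient_sup {t : ℕ} {U : Finset σ} (hU : Fintype.card σ - U.card = t)
    {j : ℕ} (hj : j < t) :
    IsSMulRegular (MvPolynomial σ R ⧸ (Ideal.span (X '' (U : Set σ)) ⊔ esymmIdeal σ R j))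
      (esymm σ R (j + 1)) := by
  classical
  induction t generalizing U j with
  | zero => omega
  | succ t ih =>
    have modulo_X {i : σ} (hi : i ∉ U) {l : ℕ} (hl : l < t) : IsSMulRegular (MvPolynomial σ R ⧸
        (Ideal.span (X '' insert i (U : Set σ)) ⊔ esymmIdeal σ R l)) (esymm σ R (l + 1)) := by
      rw [← Finset.coe_insert]
      exact ih (by rw [Finset.card_insert_of_notMem hi]; omega) hl
    have regular_X {i : σ} (hi : i ∉ U) : IsSMulRegular (MvPolynomial σ R ⧸
        (Ideal.span (X '' (U : Set σ)) ⊔ esymmIdeal σ R j)) (X i : MvPolynomial σ R) :=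
      isSMulRegular_X_quotient_sup σ R hi fun l hl ↦ modulo_X hi (by omega)
    rcases Nat.lt_succ_iff_lt_or_eq.1 hj with hjt | rfl
    · obtain ⟨i, hi⟩ : ∃ i, i ∉ U := by
        by_contra! hall
        simp [Finset.eq_univ_iff_forall.2 hall] at hU
      have hmod := modulo_X hi hjt
      rw [span_X_insert_sup_esymmIdeal] at hmod
      exact isSMulRegular_quotient_of_sup_span_singleton
        (isHomogeneous_span_X_sup_esymmIdeal σ R U j) one_pos (isHomogeneous_X R i)
        (isHomogeneous_esymm σ R _) (regular_X hi) hmod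
    · rw [← hU]
      exact isSMulRegular_esymm_card_sub_quotient_sup σ R fun i hi ↦ regular_X hi

variable {σ R}

theorem mem_esymmIdeal_of_esymm_mul_mem {j : ℕ} (hj : j < Fintype.card σ) {p : MvPolynomial σ R}
    (hp : esymm σ R (j + 1) * p ∈ esymmIdeal σ R j) : p ∈ esymmIdeal σ R j := by
  have h := isSMulRegular_esymm_quotient_sup σ R (U := ∅) rfl (j := j) (by simpa using hj)
  rw [Finset.coe_empty, Set.image_empty, Ideal.span_empty, bot_sup_eq] at h
  exact mem_of_isSMulRegular_quotient_of_smul_mem h hp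

theorem X_pow_card_mem_esymmIdeal (x : σ) :
    (X x : MvPolynomial σ R) ^ Fintype.card σ ∈ esymmIdeal σ R (Fintype.card σ) := by
  have hVieta := congrArg (Polynomial.eval (-X x)) (prod_C_add_X_eq_sum_esymm R σ)
  simp only [Polynomial.eval_prod, Finset.sum_range_succ', Polynomial.eval_add,
    Polynomial.eval_finsetSum, Polynomial.eval_mul, Polynomial.eval_pow, Polynomial.eval_X,
    Polynomial.eval_C, esymm_zero, map_one, one_mul, Nat.sub_zero] at hVieta
  rw [Finset.prod_eq_zero (Finset.mem_univ x) (by simp)] at hVieta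
  have hneg := neg_mem (Ideal.sum_mem (esymmIdeal σ R (Fintype.card σ)) fun i hi ↦
    Ideal.mul_mem_right ((-X x) ^ (Fintype.card σ - (i + 1))) _
      (esymm_mem_esymmIdeal (Finset.mem_range.1 hi)))
  rw [neg_eq_of_add_eq_zero_right hVieta.symm] at hneg
  have h := Ideal.mul_mem_left _ ((-1) ^ Fintype.card σ) hneg
  rwa [← mul_pow, neg_one_mul, neg_neg] at h

theorem mem_esymmIdeal_card {m : ℕ} (hm : Fintype.card σ * Fintype.card σ < m)
    {p : MvPolynomial σ R} (hp : p.IsHomogeneous m) : p ∈ esymmIdeal σ R (Fintype.card σ) := by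
  rw [p.as_sum]
  refine Ideal.sum_mem _ fun a ha ↦ ?_
  have hdeg : ∑ x, a x = m := by
    rw [← Finsupp.degree_eq_sum, Finsupp.degree_eq_weight_one]
    exact hp (mem_support_iff.1 ha)
  obtain ⟨x, -, hx⟩ : ∃ x ∈ Finset.univ, Fintype.card σ < a x :=
    Finset.exists_lt_of_sum_lt (by simpa [hdeg] using hm)
  refine Ideal.mem_of_dvd _ ?_ (X_pow_card_mem_esymmIdeal x)
  rw [X_pow_eq_monomial, monomial_dvd_monomial]
  exact ⟨Or.inr (by simpa using hx.le), one_dvd _⟩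

end SymmetricRegularSequence

section Ext

variable {C : Type*} [Category* C] [Abelian C]

theorem subsingleton_ext_obj_iff_abelianExt (R : Type*) [Ring R] [Linear R C]
    [EnoughProjectives C] [HasExt.{w} C] (X Y : C) (n : ℕ) :
    Subsingleton (((Ext R C (n + 1)).obj (Opposite.op X)).obj Y) ↔
      Subsingleton (Abelian.Ext.{w} X Y (n + 1)) := by
  let P := ProjectiveResolution.of X
  rw [← ModuleCat.isZero_iff_subsingleton, (P.isoExt (R := R) (n + 1) Y).isZero_iff,
    ← HomologicalComplex.exactAt_iff_isZero_homology,
    HomologicalComplex.exactAt_iff' _ n (n + 1) (n + 2) (by simp) (by simp),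
    ShortComplex.moduleCat_exact_iff]
  constructor
  · intro h
    refine subsingleton_of_forall_eq 0 fun α ↦ ?_
    obtain ⟨f, hf, rfl⟩ := P.extMk_surjective α (n + 2) rfl
    exact (P.extMk_eq_zero_iff f (n + 2) rfl hf n rfl).2 (h f hf)
  · intro _ f hf
    exact (P.extMk_eq_zero_iff f (n + 2) rfl hf n rfl).1 (Subsingleton.elim _ _)

variable [HasExt.{w} C] {S : ShortComplex C}

theorem subsingleton_ext_X₁_iff_of_injective (hS : S.ShortExact) [Injective S.X₂] (X : C)
    (n : ℕ) : Subsingleton (Abelian.Ext.{w} X S.X₁ (n + 2)) ↔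
      Subsingleton (Abelian.Ext.{w} X S.X₃ (n + 1)) := by
  constructor <;> refine fun _ ↦ subsingleton_of_forall_eq 0 fun x ↦ ?_
  · obtain ⟨y, rfl⟩ := Abelian.Ext.covariant_sequence_exact₃ X hS x rfl (Subsingleton.elim _ _)
    rw [y.eq_zero_of_injective, Abelian.Ext.zero_comp]
  · obtain ⟨y, rfl⟩ := Abelian.Ext.covariant_sequence_exact₁ X hS x
      (Abelian.Ext.eq_zero_of_injective _) rfl
    rw [Subsingleton.elim y 0, Abelian.Ext.zero_comp]

theorem subsingleton_ext_X₁_one_iff_of_injective (hS : S.ShortExact) [Injective S.X₂] (X : C) :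
    Subsingleton (Abelian.Ext.{w} X S.X₁ 1) ↔
      ∀ f : X ⟶ S.X₃, ∃ g : X ⟶ S.X₂, g ≫ S.g = f := by
  constructor
  · intro _ f
    obtain ⟨x, hx⟩ := Abelian.Ext.covariant_sequence_exact₃ X hS (Abelian.Ext.mk₀ f) (zero_add 1)
      (Subsingleton.elim _ _)
    obtain ⟨g, rfl⟩ := (Abelian.Ext.mk₀_bijective _ _).2 x
    exact ⟨g, (Abelian.Ext.mk₀_bijective _ _).1 (by rwa [Abelian.Ext.mk₀_comp_mk₀] at hx)⟩
  · refine fun h ↦ subsingleton_of_forall_eq 0 fun x ↦ ?_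
    obtain ⟨y, rfl⟩ := Abelian.Ext.covariant_sequence_exact₁ X hS x
      (Abelian.Ext.eq_zero_of_injective _) (zero_add 1)
    obtain ⟨f, rfl⟩ := (Abelian.Ext.mk₀_bijective _ _).2 y
    obtain ⟨g, rfl⟩ := h f
    rw [← Abelian.Ext.mk₀_comp_mk₀, Abelian.Ext.comp_assoc_of_second_deg_zero, hS.comp_extClass,
      Abelian.Ext.comp_zero]

theorem subsingleton_ext_X₃_iff_of_projective (hS : S.ShortExact) [Projective S.X₂] (Y : C)
    (n : ℕ) : Subsingleton (Abelian.Ext.{w} S.X₃ Y (n + 2)) ↔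
      Subsingleton (Abelian.Ext.{w} S.X₁ Y (n + 1)) := by
  constructor <;> refine fun _ ↦ subsingleton_of_forall_eq 0 fun x ↦ ?_
  · obtain ⟨y, rfl⟩ := Abelian.Ext.contravariant_sequence_exact₁ hS Y x (add_comm 1 (n + 1))
      (Subsingleton.elim _ _)
    rw [y.eq_zero_of_projective, Abelian.Ext.comp_zero]
  · obtain ⟨y, rfl⟩ := Abelian.Ext.contravariant_sequence_exact₃ hS Y x
      (Abelian.Ext.eq_zero_of_projective _) (add_comm 1 (n + 1))
    rw [Subsingleton.elim y 0, Abelian.Ext.comp_zero]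

end Ext

section SumOfConjugates

open LinearMap

variable {k G : Type*} [Group G] [Fintype G]

section CommRing

variable [CommRing k] {U V W : Type*}
  [AddCommGroup U] [Module k U] [Module k[G] U] [IsScalarTower k k[G] U]
  [AddCommGroup V] [Module k V] [Module k[G] V] [IsScalarTower k k[G] V]
  [AddCommGroup W] [Module k W] [Module k[G] W] [IsScalarTower k k[G] W]

theorem sumOfConjugates_restrictScalars_comp (f : V →ₗ[k[G]] U) (π : W →ₗ[k] V) :
    (f.restrictScalars k ∘ₗ π).sumOfConjugates G = f.restrictScalars k ∘ₗ π.sumOfConjugates G := by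
  ext
  simp [sumOfConjugates_apply, conjugate_apply]

theorem sumOfConjugates_comp_restrictScalars (π : V →ₗ[k] U) (f : W →ₗ[k[G]] V) :
    (π ∘ₗ f.restrictScalars k).sumOfConjugates G = π.sumOfConjugates G ∘ₗ f.restrictScalars k := by
  ext
  simp [sumOfConjugates_apply, conjugate_apply]

theorem sumOfConjugates_sub (π π' : W →ₗ[k] V) :
    (π - π').sumOfConjugates G = π.sumOfConjugates G - π'.sumOfConjugates G := by
  ext
  simp [sumOfConjugates_apply, conjugate_apply, smul_sub]

theorem sumOfConjugates_mem {π : W →ₗ[k] V} {P : Submodule k[G] V} (hπ : ∀ x, π x ∈ P) (x : W) :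
    π.sumOfConjugates G x ∈ P := by
  rw [sumOfConjugates_apply]
  exact sum_mem fun g _ ↦ P.smul_mem _ (hπ _)

end CommRing

section Field

variable [Field k] {V : Type*}
  [AddCommGroup V] [Module k V] [Module k[G] V] [IsScalarTower k k[G] V]

theorem projective_of_sumOfConjugates_eq_id {Θ : V →ₗ[k] V}
    (hΘ : Θ.sumOfConjugates G = .id) : Module.Projective k[G] V := by
  refine .of_lifting_property'' fun f hf ↦ ?_
  obtain ⟨s, hs⟩ :=
    (f.restrictScalars k).exists_rightInverse_of_surjective (range_eq_top.2 hf)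
  refine ⟨(s ∘ₗ Θ).sumOfConjugatesEquivariant G, restrictScalars_injective k ?_⟩
  calc f.restrictScalars k ∘ₗ (s ∘ₗ Θ).sumOfConjugates G
      = ((f.restrictScalars k ∘ₗ s) ∘ₗ Θ).sumOfConjugates G :=
        (sumOfConjugates_restrictScalars_comp f (s ∘ₗ Θ)).symm
    _ = .id := by rw [hs, id_comp, hΘ]

theorem injective_of_sumOfConjugates_eq_id {Θ : V →ₗ[k] V}
    (hΘ : Θ.sumOfConjugates G = .id) : Module.Injective k[G] V where
  out X Y _ _ _ _ i hi f := by
    let := Module.compHom X (algebraMap k k[G])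
    let := Module.compHom Y (algebraMap k k[G])
    have : IsScalarTower k k[G] X := .of_algebraMap_smul fun _ _ ↦ rfl
    have : IsScalarTower k k[G] Y := .of_algebraMap_smul fun _ _ ↦ rfl
    obtain ⟨π, hπ⟩ :=
      (i.restrictScalars k).exists_leftInverse_of_injective (ker_eq_bot.2 hi)
    refine ⟨(Θ ∘ₗ f.restrictScalars k ∘ₗ π).sumOfConjugatesEquivariant G, fun x ↦ ?_⟩
    have h : (Θ ∘ₗ f.restrictScalars k ∘ₗ π).sumOfConjugates G ∘ₗ i.restrictScalars k =
        f.restrictScalars k :=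
      calc (Θ ∘ₗ f.restrictScalars k ∘ₗ π).sumOfConjugates G ∘ₗ i.restrictScalars k
          = ((Θ ∘ₗ f.restrictScalars k ∘ₗ π) ∘ₗ i.restrictScalars k).sumOfConjugates G :=
            (sumOfConjugates_comp_restrictScalars _ i).symm
        _ = (Θ ∘ₗ f.restrictScalars k).sumOfConjugates G := by
            rw [comp_assoc, comp_assoc, hπ, comp_id]
        _ = f.restrictScalars k := by
            rw [sumOfConjugates_comp_restrictScalars, hΘ, id_comp]
    exact LinearMap.congr_fun h x

theorem injective_submodule_of_sumOfConjugates_eq_id {Θ : V →ₗ[k] V}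
    (hΘ : Θ.sumOfConjugates G = .id) {P : Submodule k[G] V} (hP : ∀ u ∈ P, Θ u ∈ P) :
    Module.Injective k[G] P := by
  have : IsScalarTower k k[G] P := P.isScalarTower
  let ΘP : P →ₗ[k] P :=
    { toFun := fun u ↦ ⟨Θ u, hP u u.2⟩
      map_add' := fun u v ↦ Subtype.ext (map_add Θ (u : V) v)
      map_smul' := fun a u ↦ Subtype.ext (map_smul Θ a (u : V)) }
  refine injective_of_sumOfConjugates_eq_id (Θ := ΘP) ?_
  ext u
  have h := LinearMap.congr_fun hΘ (u : V)
  rw [sumOfConjugates_apply] at h ⊢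
  rwa [AddSubmonoidClass.coe_finsetSum]

theorem exists_linearMap_mem_sub_mem {U V W : Type*} [AddCommGroup U] [Module k U]
    [AddCommGroup V] [Module k V] [AddCommGroup W] [Module k W] (c : U →ₗ[k] V)
    {P : Submodule k U} {Q : Submodule k V} (f : W →ₗ[k] V)
    (h : ∀ x, ∃ u ∈ P, f x - c u ∈ Q) :
    ∃ s : W →ₗ[k] U, ∀ x, s x ∈ P ∧ f x - c (s x) ∈ Q := by
  let q : P →ₗ[k] V ⧸ Q := Q.mkQ ∘ₗ c ∘ₗ P.subtype
  have hq : ∀ x, Q.mkQ (f x) ∈ q.range := fun x ↦ by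
    obtain ⟨u, hu, hux⟩ := h x
    exact ⟨⟨u, hu⟩, ((Submodule.Quotient.eq Q).2 hux).symm⟩
  obtain ⟨s, hs⟩ := Module.projective_lifting_property q.rangeRestrict
    ((Q.mkQ ∘ₗ f).codRestrict _ hq) q.surjective_rangeRestrict
  refine ⟨P.subtype ∘ₗ s, fun x ↦ ⟨(s x).2, (Submodule.Quotient.eq Q).1 ?_⟩⟩
  exact (congrArg Subtype.val (LinearMap.congr_fun hs x)).symm

theorem exists_equivariant_mem_sub_mem {Θ : V →ₗ[k] V} (hΘ : Θ.sumOfConjugates G = .id)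
    {c : V →ₗ[k[G]] V} (hΘc : ∀ u, Θ (c u) = c (Θ u)) {P Q : Submodule k[G] V}
    (hP : ∀ u ∈ P, Θ u ∈ P) (hQ : ∀ u ∈ Q, Θ u ∈ Q) {M : Type*} [AddCommGroup M]
    [Module k[G] M] (f : M →ₗ[k[G]] V) (h : ∀ x, ∃ u ∈ P, f x - c u ∈ Q) :
    ∃ v : M →ₗ[k[G]] V, ∀ x, v x ∈ P ∧ f x - c (v x) ∈ Q := by
  let := Module.compHom M (algebraMap k k[G])
  have : IsScalarTower k k[G] M := .of_algebraMap_smul fun _ _ ↦ rfl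
  obtain ⟨s, hs⟩ := exists_linearMap_mem_sub_mem (c.restrictScalars k)
    (P := P.restrictScalars k) (Q := Q.restrictScalars k) (f.restrictScalars k) h
  have hdiff : (Θ ∘ₗ (f.restrictScalars k - c.restrictScalars k ∘ₗ s)).sumOfConjugates G =
      f.restrictScalars k - c.restrictScalars k ∘ₗ (Θ ∘ₗ s).sumOfConjugates G := by
    have hc : Θ ∘ₗ c.restrictScalars k ∘ₗ s = c.restrictScalars k ∘ₗ Θ ∘ₗ s :=
      LinearMap.ext fun x ↦ hΘc (s x)
    have hf : (Θ ∘ₗ f.restrictScalars k).sumOfConjugates G = f.restrictScalars k := by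
      rw [sumOfConjugates_comp_restrictScalars, hΘ, id_comp]
    rw [comp_sub, hc, sumOfConjugates_sub, hf, sumOfConjugates_restrictScalars_comp]
  refine ⟨(Θ ∘ₗ s).sumOfConjugatesEquivariant G,
    fun x ↦ ⟨sumOfConjugates_mem (π := Θ ∘ₗ s) (fun y ↦ hP _ (hs y).1) x, ?_⟩⟩
  have hmem := sumOfConjugates_mem (G := G) (P := Q)
    (π := Θ ∘ₗ (f.restrictScalars k - c.restrictScalars k ∘ₗ s)) (fun y ↦ hQ _ (hs y).2) x
  rwa [hdiff] at hmem

end Field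

end SumOfConjugates

/-- A resolution of `N` by injective `k[G]`-modules, packaged as a complex carrying a regular
sequence of chain endomorphisms. The `k`-linear operator `Θ`, whose conjugates sum to the
identity, makes averaging over `G` possible and plays the role of injectivity. -/
structure RegularResolution (k G : Type*) [Field k] [Group G] [Fintype G] (N J : Type*)
    [AddCommGroup N] [Module k[G] N]
    [AddCommGroup J] [Module k J] [Module k[G] J] [IsScalarTower k k[G] J]
    (n B : ℕ) (δ : ℕ → ℕ) extends RegularSequenceComplex k[G] J n B δ where
  W_zero : W 0 = ⊥
  augmentation : N →ₗ[k[G]] J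
  augmentation_injective : Function.Injective augmentation
  range_augmentation : LinearMap.range augmentation = degree 0 ⊓ LinearMap.ker d
  exists_d_eq : ∀ {m z}, z ∈ degree (m + 1) → d z = 0 → ∃ w ∈ degree m, d w = z
  Θ : J →ₗ[k] J
  sumOfConjugates_Θ : Θ.sumOfConjugates G = LinearMap.id
  Θ_mem_degree : ∀ {m u}, u ∈ degree m → Θ u ∈ degree m
  Θ_mem_W : ∀ {j u}, u ∈ W j → Θ u ∈ W j
  Θ_c : ∀ j u, Θ (c j u) = c j (Θ u)

/-- The `R`-linear maps into `A` with values in `P`. -/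
def homsInto (k : Type*) {R A : Type*} [CommRing k] [Ring R] [Algebra k R] [AddCommGroup A]
    [Module k A] [Module R A] [IsScalarTower k R A] (M : Type*) [AddCommGroup M] [Module R M]
    (P : Submodule R A) : Submodule k (M →ₗ[R] A) where
  carrier := {f | ∀ x, f x ∈ P}
  add_mem' hf hg x := add_mem (hf x) (hg x)
  zero_mem' _ := zero_mem P
  smul_mem' a _ hf x := P.smul_of_tower_mem a (hf x)

namespace RegularResolution

variable {k G : Type*} [Field k] [Group G] [Fintype G] {N J : Type*}
  [AddCommGroup N] [Module k[G] N]
  [AddCommGroup J] [Module k J] [Module k[G] J] [IsScalarTower k k[G] J]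
  {n B : ℕ} {δ : ℕ → ℕ} (K : RegularResolution k G N J n B δ)
  (M : Type*) [AddCommGroup M] [Module k[G] M]

/-- The complex `Hom_{k[G]}(M, J)`. -/
noncomputable def hom : RegularSequenceComplex k (M →ₗ[k[G]] J) n B δ where
  degree m := homsInto k M (K.degree m)
  d := K.d.compRight k
  c j := (K.c j).compRight k
  W j := homsInto k M (K.W j)
  d_d _ := LinearMap.ext fun _ ↦ K.d_d _
  c_d j _ := LinearMap.ext fun _ ↦ K.c_d j _
  d_mem_degree hf x := K.d_mem_degree (hf x)
  c_mem_degree j _ _ hf x := K.c_mem_degree j (hf x)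
  W_le_succ j _ hf x := K.W_le_succ j (hf x)
  d_mem_W hf x := K.d_mem_W (hf x)
  c_mem_W i _ _ hf x := K.c_mem_W i (hf x)
  c_mem_W_succ j _ _ := K.c_mem_W_succ j _
  exists_sub_mem_W {j m} _ hf hfW := by
    obtain ⟨v, hv⟩ := exists_equivariant_mem_sub_mem K.sumOfConjugates_Θ (K.Θ_c j)
      (fun _ ↦ K.Θ_mem_degree) (fun _ ↦ K.Θ_mem_W) _
      fun x ↦ K.exists_sub_mem_W (hf x) (hfW x)
    exact ⟨v, fun x ↦ (hv x).1, fun x ↦ (hv x).2⟩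
  mem_W_of_c_mem hj hf hcf x := K.mem_W_of_c_mem hj (hf x) (hcf x)
  degree_le_W hm _ hf x := K.degree_le_W hm (hf x)

section Ext

variable {k G : Type*} [Field k] [Group G] [Fintype G] {N J : Type v}
  [AddCommGroup N] [Module k[G] N]
  [AddCommGroup J] [Module k J] [Module k[G] J] [IsScalarTower k k[G] J]
  {n B : ℕ} {δ : ℕ → ℕ} (K : RegularResolution k G N J n B δ)

/-- The kernel of the differential in degree `m`. -/
noncomputable def cocycles (m : ℕ) : Submodule k[G] J := K.degree m ⊓ LinearMap.ker K.d

theorem cocycles_le_degree (m : ℕ) : K.cocycles m ≤ K.degree m := inf_le_left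

/-- The short exact sequence `0 → cocycles m → degree m → cocycles (m + 1) → 0`. -/
noncomputable abbrev cocyclesShortComplex (m : ℕ) : ShortComplex (ModuleCat.{v} k[G]) :=
  ModuleCat.shortComplexOfCompEqZero
    (Submodule.inclusion (K.cocycles_le_degree m))
    (K.d.restrict (q := K.cocycles (m + 1)) fun u hu ↦ ⟨K.d_mem_degree hu, K.d_d u⟩)
    (LinearMap.ext fun z ↦ Subtype.ext z.2.2)

theorem cocyclesShortComplex_shortExact (m : ℕ) : (K.cocyclesShortComplex m).ShortExact := by
  refine ModuleCat.shortComplex_shortExact _ (fun u ↦ ?_)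
    (Submodule.inclusion_injective (K.cocycles_le_degree m)) ?_
  · constructor
    · exact fun hu ↦ ⟨⟨u, u.2, congrArg Subtype.val hu⟩, rfl⟩
    · rintro ⟨z, rfl⟩
      exact Subtype.ext z.2.2
  · rintro ⟨z, hz, hdz⟩
    obtain ⟨w, hw, rfl⟩ := K.exists_d_eq hz hdz
    exact ⟨⟨w, hw⟩, rfl⟩

/-- The augmentation identifies `N` with the degree zero cocycles. -/
noncomputable def equivCocyclesZero : N ≃ₗ[k[G]] K.cocycles 0 :=
  LinearEquiv.ofInjective K.augmentation K.augmentation_injective ≪≫ₗ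
    LinearEquiv.ofEq _ _ K.range_augmentation

variable [Small.{v} k[G]] (M : Type v) [AddCommGroup M] [Module k[G] M]

instance (m : ℕ) : Injective (K.cocyclesShortComplex m).X₂ :=
  (Module.injective_iff_injective_object _ _).1
    (injective_submodule_of_sumOfConjugates_eq_id K.sumOfConjugates_Θ fun _ ↦ K.Θ_mem_degree)

theorem subsingleton_ext_cocycles_one_iff (m : ℕ) :
    Subsingleton (Abelian.Ext (ModuleCat.of k[G] M) (ModuleCat.of k[G] (K.cocycles m)) 1) ↔
      (K.hom M).AcyclicMod 0 m := by
  refine (subsingleton_ext_X₁_one_iff_of_injective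
    (K.cocyclesShortComplex_shortExact m) _).trans ⟨fun h z hz hdz ↦ ?_, fun h f ↦ ?_⟩
  · have hdz' : ∀ x, K.d (z x) = 0 := fun x ↦ (Submodule.mem_bot _).1 (K.W_zero ▸ hdz x)
    obtain ⟨g, hg⟩ := h (ModuleCat.ofHom (z.codRestrict (K.cocycles (m + 1))
      fun x ↦ ⟨hz x, hdz' x⟩))
    refine ⟨(K.degree m).subtype ∘ₗ g.hom, fun x ↦ (g x).2, fun x ↦ ?_⟩
    have hgx : K.d (g x) = z x := congrArg (fun f ↦ (f.hom x : J)) hg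
    change z x - K.d (g x) ∈ K.W 0
    rw [hgx, sub_self]
    exact zero_mem _
  · obtain ⟨y, hy, hdy⟩ := h ((K.cocycles (m + 1)).subtype ∘ₗ f.hom) (fun x ↦ (f x).2.1)
      fun x ↦ (show K.d (f x) = 0 from (f x).2.2) ▸ zero_mem (K.W 0)
    refine ⟨ModuleCat.ofHom (y.codRestrict (K.degree m) hy), ?_⟩
    ext x
    have hsub : f x - K.d (y x) ∈ K.W 0 := hdy x
    rw [K.W_zero, Submodule.mem_bot, sub_eq_zero] at hsub
    exact hsub.symm

theorem subsingleton_ext_cocycles_iff (i m : ℕ) :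
    Subsingleton (Abelian.Ext (ModuleCat.of k[G] M) (ModuleCat.of k[G] (K.cocycles i)) (m + 1)) ↔
      (K.hom M).AcyclicMod 0 (i + m) := by
  induction m generalizing i with
  | zero => exact K.subsingleton_ext_cocycles_one_iff M i
  | succ m ih =>
    rw [show i + (m + 1) = i + 1 + m by omega, ← ih]
    exact subsingleton_ext_X₁_iff_of_injective (K.cocyclesShortComplex_shortExact i) _ m

theorem subsingleton_ext_succ_iff_acyclicMod (m : ℕ) :
    Subsingleton (Abelian.Ext (ModuleCat.of k[G] M) (ModuleCat.of k[G] N) (m + 1)) ↔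
      (K.hom M).AcyclicMod 0 m := by
  have h := K.subsingleton_ext_cocycles_iff M 0 m
  rw [zero_add] at h
  exact ((Abelian.extFunctorObj _ (m + 1)).mapIso
    K.equivCocyclesZero.toModuleIso).addCommGroupIsoToAddEquiv.subsingleton_congr.trans h

end Ext

end RegularResolution

section ModuleOfRepresentation

variable {k G : Type*} [CommRing k] [Group G] {V : Type*} [AddCommGroup V] [Module k V]
  (ρ : Representation k G V)

/-- The module structure on the carrier of a representation. Unlike `Representation.asModule`
it does not change the carrier, and is meant to be used as a local instance. -/
noncomputable abbrev moduleOfRepresentation : Module k[G] V :=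
  Module.compHom V ρ.asAlgebraHom.toRingHom

theorem isScalarTower_moduleOfRepresentation :
    letI := moduleOfRepresentation ρ
    IsScalarTower k k[G] V :=
  letI := moduleOfRepresentation ρ
  .of_algebraMap_smul fun a x ↦ by
    change ρ.asAlgebraHom (algebraMap k k[G] a) x = a • x
    rw [AlgHom.commutes, Module.algebraMap_end_apply]

theorem single_one_smul_moduleOfRepresentation (g : G) (x : V) :
    letI := moduleOfRepresentation ρ
    (MonoidAlgebra.single g (1 : k) • x : V) = ρ g x := by
  change ρ.asAlgebraHom (MonoidAlgebra.single g 1) x = ρ g x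
  rw [Representation.asAlgebraHom_single_one]

theorem sumOfConjugates_moduleOfRepresentation [Fintype G] (Θ : Module.End k V) :
    letI := moduleOfRepresentation ρ
    haveI := isScalarTower_moduleOfRepresentation ρ
    Θ.sumOfConjugates G = ∑ g, ρ g⁻¹ * Θ * ρ g := by
  let := moduleOfRepresentation ρ
  have := isScalarTower_moduleOfRepresentation ρ
  ext x
  simp only [LinearMap.sumOfConjugates_apply, LinearMap.conjugate_apply,
    single_one_smul_moduleOfRepresentation, LinearMap.sum_apply, Module.End.mul_apply]

end ModuleOfRepresentation

section Functions

variable {k G : Type*} [CommRing k] [Group G] {N : Type*} [AddCommGroup N] [Module k N]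

/-- The functions from a `G`-set `Ω` to a representation, `g` acting by `f ↦ g ∘ f ∘ g⁻¹`. -/
def functionsRep (ρ : Representation k G N) (Ω : Type*) [MulAction G Ω] :
    Representation k G (Ω → N) where
  toFun g := LinearMap.pi fun ω ↦ ρ g ∘ₗ LinearMap.proj (g⁻¹ • ω)
  map_one' := by ext; simp
  map_mul' g h := by ext; simp [mul_smul]

variable {Ω : Type*} [MulAction G Ω]

theorem functionsRep_apply (ρ : Representation k G N) (g : G) (f : Ω → N) (ω : Ω) :
    functionsRep ρ Ω g f ω = ρ g (f (g⁻¹ • ω)) := rfl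

/-- Pointwise multiplication by a scalar function. -/
def mulPointwise (N : Type*) [AddCommGroup N] [Module k N] {Ω : Type*} (θ : Ω → k) :
    Module.End k (Ω → N) :=
  LinearMap.pi fun ω ↦ θ ω • LinearMap.proj ω

theorem sum_functionsRep_mul_mulPointwise [Fintype G] (ρ : Representation k G N) {θ : Ω → k}
    (hθ : ∀ ω, ∑ g : G, θ (g • ω) = 1) :
    ∑ g : G, functionsRep ρ Ω g⁻¹ * mulPointwise N θ * functionsRep ρ Ω g = 1 := by
  ext f ω
  simp [mulPointwise, functionsRep_apply, ← Finset.sum_smul, hθ]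

end Functions

theorem exists_injective_projective (k G : Type) [Field k] [Group G] [Finite G] (M : Type v)
    [AddCommGroup M] [Module k[G] M] :
    ∃ (T : Type v) (_ : AddCommGroup T) (_ : Module k[G] T) (ι : M →ₗ[k[G]] T),
      Module.Projective k[G] T ∧ Function.Injective ι := by
  classical
  have := Fintype.ofFinite G
  let := Module.compHom M (algebraMap k k[G])
  have : IsScalarTower k k[G] M := .of_algebraMap_smul fun _ _ ↦ rfl
  let ρ := functionsRep (Representation.ofModule' M : Representation k G M) G
  let := moduleOfRepresentation ρ
  have := isScalarTower_moduleOfRepresentation ρ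
  let ι : M →ₗ[k[G]] (G → M) := MonoidAlgebra.equivariantOfLinearOfComm (LinearMap.pi fun _ ↦ .id)
    fun g x ↦ (single_one_smul_moduleOfRepresentation ρ g fun _ ↦ x).symm
  refine ⟨G → M, _, _, ι, ?_, fun x y h ↦ congrFun h 1⟩
  refine projective_of_sumOfConjugates_eq_id (Θ := mulPointwise M (Pi.single 1 1))
    ((sumOfConjugates_moduleOfRepresentation ρ _).trans ?_)
  refine sum_functionsRep_mul_mulPointwise _ fun ω ↦ ?_
  simp [Pi.single_apply, mul_eq_one_iff_eq_inv]

theorem exists_subsingleton_ext_iff_add {k G : Type} [Field k] [Group G] [Finite G] (B : ℕ)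
    (M : ModuleCat.{v} k[G]) : ∃ M' : ModuleCat.{v} k[G], ∀ N m,
      Subsingleton (Abelian.Ext.{v} M' N (m + B + 1)) ↔
        Subsingleton (Abelian.Ext.{v} M N (m + 1)) := by
  induction B with
  | zero => exact ⟨M, fun _ _ ↦ .rfl⟩
  | succ B ih =>
    obtain ⟨M', hM'⟩ := ih
    obtain ⟨T, _, _, ι, _, hι⟩ := exists_injective_projective k G M'
    let S : ShortComplex (ModuleCat.{v} k[G]) := ModuleCat.shortComplexOfCompEqZero ι
      (LinearMap.range ι).mkQ (LinearMap.range_mkQ_comp ι)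
    have hS : S.ShortExact := ModuleCat.shortComplex_shortExact _
      (LinearMap.exact_map_mkQ_range ι) hι (Submodule.mkQ_surjective _)
    have : Projective S.X₂ := (IsProjective.iff_projective T).1 inferInstance
    exact ⟨S.X₃, fun N m ↦ (subsingleton_ext_X₃_iff_of_projective hS N (m + B)).trans (hM' N m)⟩

theorem RegularResolution.subsingleton_ext_of_consecutive {k G : Type} [Field k] [Group G]
    [Fintype G] {N J : Type v} [AddCommGroup N] [Module k[G] N]
    [AddCommGroup J] [Module k J] [Module k[G] J] [IsScalarTower k k[G] J]
    {n B : ℕ} {δ : ℕ → ℕ} (K : RegularResolution k G N J n B δ) (M : ModuleCat.{v} k[G]) {a : ℕ}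
    (h : ∀ i ≤ ∑ l ∈ Finset.range n, δ l,
      Subsingleton (Abelian.Ext.{v} M (ModuleCat.of k[G] N) (a + i + 1))) (m : ℕ) :
    Subsingleton (Abelian.Ext.{v} M (ModuleCat.of k[G] N) (m + 1)) := by
  obtain ⟨M', hM'⟩ := exists_subsingleton_ext_iff_add B M
  rw [← hM', K.subsingleton_ext_succ_iff_acyclicMod M']
  refine RegularSequenceComplex.acyclicMod_of_consecutive (t := n) (a := a + B) (zero_add n)
    (by omega) (fun i hi ↦ ?_) (by omega)
  simp only [zero_add] at hi
  rw [← K.subsingleton_ext_succ_iff_acyclicMod M', add_right_comm a]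
  exact (hM' _ _).2 (h i hi)

section CyclicMatrices

variable (k : Type*) [CommRing k] (p : ℕ)

/-- The difference operator `f ↦ f (· + 1) - f` on functions on `ZMod p`. -/
def differenceMatrix : Matrix (ZMod p) (ZMod p) k :=
  .of fun i l ↦ (if l = i + 1 then 1 else 0) - if l = i then 1 else 0

/-- The operator sending a function on `ZMod p` to the constant function with value its sum. -/
def normMatrix : Matrix (ZMod p) (ZMod p) k := .of fun _ _ ↦ 1

/-- The summation operator `f ↦ ∑ l < i, f l`, with `ZMod p` represented by `0, …, p - 1`. -/
def summationMatrix : Matrix (ZMod p) (ZMod p) k := .of fun i l ↦ if l.val < i.val then 1 else 0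

/-- The operator sending a function on `ZMod p` to the constant function with value `f 0`. -/
def evalZeroMatrix : Matrix (ZMod p) (ZMod p) k := .of fun _ l ↦ if l = 0 then 1 else 0

theorem differenceMatrix_add_add (c i l : ZMod p) :
    differenceMatrix k p (i + c) (l + c) = differenceMatrix k p i l := by
  simp [differenceMatrix, add_right_comm i c 1]

variable [NeZero p]

theorem differenceMatrix_mul (T : Matrix (ZMod p) (ZMod p) k) (i m : ZMod p) :
    (differenceMatrix k p * T) i m = T (i + 1) m - T i m := by
  simp [Matrix.mul_apply, differenceMatrix, sub_mul, Finset.sum_sub_distrib]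

theorem mul_differenceMatrix (T : Matrix (ZMod p) (ZMod p) k) (i m : ZMod p) :
    (T * differenceMatrix k p) i m = T i (m - 1) - T i m := by
  simp [Matrix.mul_apply, differenceMatrix, mul_sub, Finset.sum_sub_distrib, ← sub_eq_iff_eq_add]

theorem differenceMatrix_mul_normMatrix : differenceMatrix k p * normMatrix k p = 0 := by
  ext i m
  simp [differenceMatrix_mul, normMatrix]

theorem normMatrix_mul_differenceMatrix : normMatrix k p * differenceMatrix k p = 0 := by
  ext i m
  simp [mul_differenceMatrix, normMatrix]

theorem val_neg_one_add_one : (-1 : ZMod p).val + 1 = p := by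
  obtain ⟨q, rfl⟩ := Nat.exists_eq_add_one_of_ne_zero (NeZero.ne p)
  rw [ZMod.val_neg_one]

theorem val_add_one {p : ℕ} [NeZero p] {i : ZMod p} (hi : i ≠ -1) : (i + 1).val = i.val + 1 := by
  have hlt := ZMod.val_lt i
  have hne : i.val ≠ (-1 : ZMod p).val := fun h ↦ hi (ZMod.val_injective p h)
  have hneg := val_neg_one_add_one p
  rw [ZMod.val_add, ZMod.val_one'' (by omega), Nat.mod_eq_of_lt (by omega)]

theorem differenceMatrix_mul_summationMatrix_add :
    differenceMatrix k p * summationMatrix k p +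
      Matrix.single (-1) 0 1 * normMatrix k p = 1 := by
  ext i m
  have hcorner : (Matrix.single (-1) 0 1 * normMatrix k p : Matrix (ZMod p) (ZMod p) k) i m =
      if i = -1 then 1 else 0 := by
    by_cases h : i = -1 <;> simp [Matrix.mul_apply, Matrix.single_apply, normMatrix, h, eq_comm]
  have hm := ZMod.val_lt m
  have hneg := val_neg_one_add_one p
  rw [Matrix.add_apply, differenceMatrix_mul, hcorner, Matrix.one_apply]
  simp only [summationMatrix, Matrix.of_apply, ← (ZMod.val_injective p).eq_iff (a := i) (b := m)]
  by_cases h : i = -1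
  · subst h
    simp only [neg_add_cancel, ZMod.val_zero]
    split_ifs <;> first | omega | simp
  · rw [val_add_one h, if_neg h]
    split_ifs <;> first | omega | simp

theorem summationMatrix_mul_differenceMatrix :
    summationMatrix k p * differenceMatrix k p = 1 - evalZeroMatrix k p := by
  ext i m
  have hi := ZMod.val_lt i
  have hneg := val_neg_one_add_one p
  rw [mul_differenceMatrix, Matrix.sub_apply, Matrix.one_apply]
  simp only [summationMatrix, evalZeroMatrix, Matrix.of_apply,
    ← (ZMod.val_injective p).eq_iff (a := i) (b := m)]
  by_cases h : m = 0
  · subst h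
    simp only [zero_sub, ZMod.val_zero]
    split_ifs <;> first | omega | simp
  · have hsucc := val_add_one (i := m - 1) (by simpa [sub_eq_iff_eq_add] using h)
    rw [sub_add_cancel] at hsucc
    rw [if_neg h]
    split_ifs <;> first | omega | simp

theorem normMatrix_mul_single :
    normMatrix k p * Matrix.single (-1) 0 1 = evalZeroMatrix k p := by
  ext i m
  simp [Matrix.mul_apply, Matrix.single_apply, normMatrix, evalZeroMatrix, ite_and, eq_comm]

end CyclicMatrices

section CoordinateOperators

variable {k S I N : Type*} [CommRing k] [DecidableEq S] [Fintype I] [DecidableEq I]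
  [AddCommGroup N] [Module k N]

/-- A matrix acting on functions of several variables through the variable `x`. -/
def coordinateOp (N : Type*) [AddCommGroup N] [Module k N] (x : S) :
    Matrix I I k →ₐ[k] Module.End k ((S → I) → N) :=
  .ofLinearMap
    { toFun T :=
        { toFun f ω := ∑ l, T (ω x) l • f (Function.update ω x l)
          map_add' f g := by ext ω; simp [Finset.sum_add_distrib]
          map_smul' a f := by ext ω; simp [Finset.smul_sum, smul_comm a] }
      map_add' T U := by ext f ω; simp [add_smul, Finset.sum_add_distrib]
      map_smul' a T := by ext f ω; simp [Finset.smul_sum, mul_smul] }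
    (by ext f ω; simp [Matrix.one_apply])
    (fun T U ↦ by
      ext f ω
      simp only [LinearMap.coe_mk, AddHom.coe_mk, Module.End.mul_apply, Function.update_self,
        Function.update_idem, Matrix.mul_apply, Finset.sum_smul, Finset.smul_sum, smul_smul]
      rw [Finset.sum_comm])

theorem coordinateOp_apply (x : S) (T : Matrix I I k) (f : (S → I) → N) (ω : S → I) :
    coordinateOp N x T f ω = ∑ l, T (ω x) l • f (Function.update ω x l) := rfl

theorem commute_coordinateOp {x y : S} (h : x ≠ y) (T U : Matrix I I k) :
    Commute (coordinateOp N x T) (coordinateOp N y U) := by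
  ext f ω
  simp only [Module.End.mul_apply, coordinateOp_apply, Finset.smul_sum, Function.update_of_ne h,
    Function.update_of_ne h.symm]
  rw [Finset.sum_comm]
  refine Finset.sum_congr rfl fun l _ ↦ Finset.sum_congr rfl fun m _ ↦ ?_
  rw [smul_comm, Function.update_comm h]

variable {p : ℕ} [NeZero p]

theorem coordinateOp_differenceMatrix_const (x : S) (a : N) :
    coordinateOp N x (differenceMatrix k p) (fun _ ↦ a) = 0 := by
  ext ω
  rw [coordinateOp_apply, ← Finset.sum_smul]
  simp [differenceMatrix]

theorem coordinateOp_evalZeroMatrix (x : S) (f : (S → ZMod p) → N) (ω : S → ZMod p) :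
    coordinateOp N x (evalZeroMatrix k p) f ω = f (Function.update ω x 0) := by
  simp [coordinateOp_apply, evalZeroMatrix]

end CoordinateOperators

/-- An action of `G` on the functions `S → A` which permutes the coordinates according to the
action of `G` on `S` and acts by translations on each of them. -/
class AffineFunctionAction (G S A : Type*) [Group G] [MulAction G S] [AddCommGroup A] extends
    MulAction G (S → A) where
  smul_sub_smul : ∀ (g : G) (ω ω' : S → A) (x : S),
    (g • ω) (g • x) - (g • ω') (g • x) = ω x - ω' x

namespace AffineFunctionAction

variable {G S A : Type*} [Group G] [MulAction G S] [AddCommGroup A] [AffineFunctionAction G S A]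

theorem inv_smul_update [DecidableEq S] (g : G) (ω : S → A) (x : S) (c : A) :
    g⁻¹ • Function.update ω (g • x) (ω (g • x) + c) =
      Function.update (g⁻¹ • ω) x ((g⁻¹ • ω) x + c) := by
  ext y
  have h := smul_sub_smul g⁻¹ (Function.update ω (g • x) (ω (g • x) + c)) ω (g • y)
  rw [inv_smul_smul, sub_eq_iff_eq_add'] at h
  rw [h]
  obtain rfl | hy := eq_or_ne y x
  · simp
  · simp [hy, (MulAction.injective g).ne hy]

variable {k N : Type*} [CommRing k] [AddCommGroup N] [Module k N] [DecidableEq S]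
  [Fintype A] [DecidableEq A]

theorem functionsRep_mul_coordinateOp (ρ : Representation k G N) {T : Matrix A A k}
    (hT : ∀ c i l, T (i + c) (l + c) = T i l) (g : G) (x : S) :
    functionsRep ρ (S → A) g * coordinateOp N x T =
      coordinateOp N (g • x) T * functionsRep ρ (S → A) g := by
  ext f ω
  simp only [Module.End.mul_apply, functionsRep_apply, coordinateOp_apply, map_sum, map_smul]
  have hTc (i c : A) : T i (i + c) = T 0 c := by simpa [add_comm] using hT i 0 c
  refine Fintype.sum_equiv ((Equiv.addLeft ((g⁻¹ • ω) x)).symm.trans (Equiv.addLeft (ω (g • x))))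
    _ _ fun l ↦ ?_
  obtain ⟨c, rfl⟩ := (Equiv.addLeft ((g⁻¹ • ω) x)).surjective l
  simp only [Equiv.trans_apply, Equiv.addLeft_symm, Equiv.coe_addLeft, neg_add_cancel_left,
    inv_smul_update, hTc]

end AffineFunctionAction

section PolynomialOperators

open MvPolynomial

variable (k : Type*) [CommRing k] {S : Type*}

/-- Multiplication by the variable `x`. -/
noncomputable def mulX (x : S) : Module.End k (MvPolynomial S k) := LinearMap.mulLeft k (X x)

/-- Division by the variable `x`, discarding the monomials not divisible by it. -/
noncomputable def divX (x : S) : Module.End k (MvPolynomial S k) where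
  toFun a := a.divMonomial (Finsupp.single x 1)
  map_add' a b := add_divMonomial a b _
  map_smul' r a := by ext m; simp [coeff_divMonomial]

/-- Setting the variable `x` to zero. -/
noncomputable def modX (x : S) : Module.End k (MvPolynomial S k) := 1 - mulX k x * divX k x

variable {k}

theorem mulX_apply (x : S) (a : MvPolynomial S k) : mulX k x a = X x * a := rfl

theorem coeff_divX (x : S) (a : MvPolynomial S k) (m : S →₀ ℕ) :
    coeff m (divX k x a) = coeff (Finsupp.single x 1 + m) a := coeff_divMonomial _ _ _

theorem modX_apply (x : S) (a : MvPolynomial S k) :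
    modX k x a = a.modMonomial (Finsupp.single x 1) :=
  sub_eq_iff_eq_add'.2 (divMonomial_add_modMonomial_single a x).symm

variable (k) in
theorem divX_mul_mulX (x : S) : divX k x * mulX k x = 1 :=
  LinearMap.ext fun a ↦ X_mul_divMonomial x a

variable (k) in
theorem commute_mulX (x y : S) : Commute (mulX k x) (mulX k y) :=
  LinearMap.ext fun a ↦ mul_left_comm (X x) (X y) a

variable (k) in
theorem commute_divX_mulX {x y : S} (h : x ≠ y) : Commute (divX k x) (mulX k y) := by
  classical
  ext a m
  simp only [LinearMap.comp_apply, Module.End.mul_apply, coeff_divX, mulX_apply, coeff_X_mul']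
  have hmem : y ∈ (Finsupp.single x 1 + m).support ↔ y ∈ m.support := by
    simp [h]
  simp only [hmem]
  split_ifs with hy
  · rw [add_tsub_assoc_of_le]
    simpa [Nat.one_le_iff_ne_zero] using hy
  · rfl

theorem coeff_modX (x : S) (a : MvPolynomial S k) (m : S →₀ ℕ) :
    coeff m (modX k x a) = if m x = 0 then coeff m a else 0 := by
  rw [modX_apply]
  split_ifs with hm
  · exact coeff_modMonomial_of_not_le a (by simp [hm])
  · exact coeff_modMonomial_of_le a (by simpa [Nat.one_le_iff_ne_zero] using hm)

variable (k) in
theorem commute_modX (x y : S) : Commute (modX k x) (modX k y) := by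
  ext a m
  simp [Module.End.mul_apply, coeff_modX, ← ite_and, and_comm]

theorem modX_monomial {x : S} {m : S →₀ ℕ} (hm : m x ≠ 0) (r : k) :
    modX k x (monomial m r) = 0 := by
  classical
  ext m'
  rw [coeff_modX, coeff_monomial, coeff_zero, ite_eq_right_iff, ite_eq_right_iff]
  rintro hm' rfl
  exact absurd hm' hm

theorem divX_eq_zero {a : MvPolynomial S k} (ha : a.IsHomogeneous 0) (x : S) : divX k x a = 0 := by
  ext m
  rw [coeff_divX, coeff_zero]
  by_contra h
  simpa [Finsupp.weight_single] using ha h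

theorem modX_one (x : S) : modX k x 1 = 1 := by
  simp [modX, divX_eq_zero (isHomogeneous_one S k)]

theorem isHomogeneous_divX {a : MvPolynomial S k} {m : ℕ} (ha : a.IsHomogeneous (m + 1)) (x : S) :
    (divX k x a).IsHomogeneous m := by
  intro b hb
  have hdeg := ha (coeff_divX x a b ▸ hb)
  rw [map_add, Finsupp.weight_single, Pi.one_apply, smul_eq_mul, mul_one] at hdeg
  omega

variable {G : Type*} [Group G] [MulAction G S]

variable (k S) in
/-- The action of `G` on polynomials permuting the variables. -/
noncomputable def renameRep (G : Type*) [Group G] [MulAction G S] :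
    Representation k G (MvPolynomial S k) where
  toFun g := (rename (g • · : S → S)).toLinearMap
  map_one' := by
    simp only [one_smul]
    exact LinearMap.ext rename_id_apply
  map_mul' g h := LinearMap.ext fun a ↦ by
    simp [rename_rename, Function.comp_def, mul_smul]

theorem renameRep_apply (g : G) (a : MvPolynomial S k) :
    renameRep k S G g a = rename (g • ·) a := rfl

theorem renameRep_mul_mulX (g : G) (x : S) :
    renameRep k S G g * mulX k x = mulX k (g • x) * renameRep k S G g :=
  LinearMap.ext fun a ↦ by simp [renameRep_apply, mulX_apply]

end PolynomialOperators

section ExteriorOperators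

variable (k : Type*) [CommRing k] {S : Type*}

/-- Exterior multiplication by the basis vector `x`. -/
noncomputable def wedge (x : S) : Module.End k (ExteriorAlgebra k (S →₀ k)) :=
  LinearMap.mulLeft k (ExteriorAlgebra.ι k (Finsupp.single x 1))

/-- Contraction with the coordinate function of `x`. -/
noncomputable def contract (x : S) : Module.End k (ExteriorAlgebra k (S →₀ k)) :=
  CliffordAlgebra.contractLeft (Q := 0) (Finsupp.lapply (R := k) x)

variable {k}

theorem wedge_apply (x : S) (w : ExteriorAlgebra k (S →₀ k)) :
    wedge k x w = ExteriorAlgebra.ι k (Finsupp.single x 1) * w := rfl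

theorem contract_ι_mul (x : S) (v : S →₀ k) (w : ExteriorAlgebra k (S →₀ k)) :
    contract k x (ExteriorAlgebra.ι k v * w) = v x • w - ExteriorAlgebra.ι k v * contract k x w :=
  CliffordAlgebra.contractLeft_ι_mul (Q := 0) (d := Finsupp.lapply (R := k) x) v w

theorem contract_algebraMap (x : S) (r : k) : contract k x (algebraMap k _ r) = 0 :=
  CliffordAlgebra.contractLeft_algebraMap (Q := 0) (Finsupp.lapply (R := k) x) r

theorem contract_one (x : S) : contract k x 1 = 0 := by
  rw [← map_one (algebraMap k _), contract_algebraMap]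

variable (k)

theorem wedge_mul_wedge (x y : S) : wedge k x * wedge k y = -(wedge k y * wedge k x) := by
  refine LinearMap.ext fun w ↦ ?_
  simp only [Module.End.mul_apply, wedge_apply, LinearMap.neg_apply, ← mul_assoc]
  rw [← neg_mul, eq_neg_of_add_eq_zero_left (ExteriorAlgebra.ι_add_mul_swap _ _)]

theorem wedge_mul_self (x : S) : wedge k x * wedge k x = 0 :=
  LinearMap.ext fun w ↦ by simp [wedge_apply, ← mul_assoc]

theorem contract_mul_contract (x y : S) :
    contract k x * contract k y = -(contract k y * contract k x) :=
  LinearMap.ext fun w ↦ CliffordAlgebra.contractLeft_comm (Q := 0)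
    (d := Finsupp.lapply (R := k) x) (d' := Finsupp.lapply (R := k) y) w

theorem contract_mul_self (x : S) : contract k x * contract k x = 0 :=
  LinearMap.ext fun w ↦ CliffordAlgebra.contractLeft_contractLeft (Q := 0)
    (d := Finsupp.lapply (R := k) x) w

theorem wedge_mul_contract_add (x : S) : wedge k x * contract k x + contract k x * wedge k x = 1 :=
  LinearMap.ext fun w ↦ by simp [wedge_apply, contract_ι_mul]

theorem contract_mul_wedge {x y : S} (h : x ≠ y) :
    contract k x * wedge k y = -(wedge k y * contract k x) :=
  LinearMap.ext fun w ↦ by simp [wedge_apply, contract_ι_mul, h.symm]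

theorem contract_mul_wedge_one (x : S) : (contract k x * wedge k x) 1 = 1 := by
  simpa [contract_one] using LinearMap.congr_fun (wedge_mul_contract_add k x) 1

theorem commute_mul_of_anticommute {R : Type*} [Ring R] {i j e f : R} (hij : i * j = -(j * i))
    (hef : e * f = -(f * e)) (hif : i * f = -(f * i)) (hej : e * j = -(j * e)) :
    Commute (i * e) (j * f) := by
  calc i * e * (j * f) = i * (e * j) * f := by simp only [mul_assoc]
    _ = -(i * j * (e * f)) := by rw [hej]; simp [mul_assoc]
    _ = -(j * (i * f) * e) := by rw [hij, hef]; simp [mul_assoc]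
    _ = j * f * (i * e) := by rw [hif]; simp [mul_assoc]

theorem commute_contract_mul_wedge (x y : S) :
    Commute (contract k x * wedge k x) (contract k y * wedge k y) := by
  obtain rfl | h := eq_or_ne x y
  · exact Commute.refl _
  · exact commute_mul_of_anticommute (contract_mul_contract k x y) (wedge_mul_wedge k x y)
      (contract_mul_wedge k h) (by rw [contract_mul_wedge k h.symm, neg_neg])

variable {k} {i : ℕ}

theorem exteriorPower_succ_le {M : Type*} [AddCommGroup M] [Module k M]
    {P : Submodule k (ExteriorAlgebra k M)}
    (h : ∀ v, ∀ w ∈ ⋀[k]^i M, ExteriorAlgebra.ι k v * w ∈ P) : ⋀[k]^(i + 1) M ≤ P := by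
  rw [ExteriorAlgebra.exteriorPower, pow_succ', Submodule.mul_le]
  rintro _ ⟨v, rfl⟩ w hw
  exact h v w hw

theorem ι_mul_mem_exteriorPower {M : Type*} [AddCommGroup M] [Module k M] (v : M)
    {w : ExteriorAlgebra k M} (hw : w ∈ ⋀[k]^i M) :
    ExteriorAlgebra.ι k v * w ∈ ⋀[k]^(i + 1) M := by
  rw [ExteriorAlgebra.exteriorPower, pow_succ']
  exact Submodule.mul_mem_mul ⟨v, rfl⟩ hw

theorem mem_exteriorPower_zero {M : Type*} [AddCommGroup M] [Module k M]
    {w : ExteriorAlgebra k M} : w ∈ ⋀[k]^0 M ↔ ∃ r : k, algebraMap k _ r = w := by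
  rw [ExteriorAlgebra.exteriorPower, pow_zero, Submodule.mem_one]

theorem wedge_mem_exteriorPower (x : S) {w : ExteriorAlgebra k (S →₀ k)}
    (hw : w ∈ ⋀[k]^i (S →₀ k)) : wedge k x w ∈ ⋀[k]^(i + 1) (S →₀ k) :=
  ι_mul_mem_exteriorPower _ hw

theorem contract_eq_zero (x : S) {w : ExteriorAlgebra k (S →₀ k)}
    (hw : w ∈ ⋀[k]^0 (S →₀ k)) : contract k x w = 0 := by
  obtain ⟨r, rfl⟩ := mem_exteriorPower_zero.1 hw
  exact contract_algebraMap x r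

theorem contract_mem_exteriorPower (x : S) {w : ExteriorAlgebra k (S →₀ k)}
    (hw : w ∈ ⋀[k]^(i + 1) (S →₀ k)) : contract k x w ∈ ⋀[k]^i (S →₀ k) := by
  induction i generalizing w with
  | zero =>
    refine exteriorPower_succ_le (P := (⋀[k]^0 (S →₀ k)).comap (contract k x)) ?_ hw
    intro v w hw
    rw [Submodule.mem_comap, contract_ι_mul, contract_eq_zero x hw, mul_zero, sub_zero]
    exact Submodule.smul_mem _ _ hw
  | succ i ih =>
    refine exteriorPower_succ_le (P := (⋀[k]^(i + 1) (S →₀ k)).comap (contract k x)) ?_ hw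
    intro v w hw
    rw [Submodule.mem_comap, contract_ι_mul]
    exact sub_mem (Submodule.smul_mem _ _ hw) (ι_mul_mem_exteriorPower _ (ih hw))

theorem exteriorPower_succ_le_of_wedge_mem {P : Submodule k (ExteriorAlgebra k (S →₀ k))}
    (h : ∀ x, ∀ w ∈ ⋀[k]^i (S →₀ k), wedge k x w ∈ P) : ⋀[k]^(i + 1) (S →₀ k) ≤ P := by
  refine exteriorPower_succ_le fun v w hw ↦ ?_
  induction v using Finsupp.induction_linear with
  | zero => simp
  | add v v' hv hv' => simpa only [map_add, add_mul] using add_mem hv hv'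
  | single x r =>
    rw [← Finsupp.smul_single_one, map_smul, smul_mul_assoc]
    exact P.smul_mem r (h x w hw)

theorem exteriorPower_eq_bot [Fintype S] (hi : Fintype.card S < i) : ⋀[k]^i (S →₀ k) = ⊥ := by
  nontriviality k
  have h := exteriorPower.finrank_eq (R := k) (M := S →₀ k) (n := i)
  rw [Module.finrank_finsupp_self, Nat.choose_eq_zero_of_lt hi,
    Module.finrank_eq_zero_iff_of_free] at h
  rwa [← Submodule.subsingleton_iff_eq_bot]

variable {G : Type*} [Group G] [MulAction G S]

variable (k S) in
/-- The action of `G` on the exterior algebra permuting the basis vectors. -/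
noncomputable def exteriorRep (G : Type*) [Group G] [MulAction G S] :
    Representation k G (ExteriorAlgebra k (S →₀ k)) where
  toFun g := (ExteriorAlgebra.map (Finsupp.lmapDomain k k (g • · : S → S))).toLinearMap
  map_one' := by
    have h : Finsupp.lmapDomain k k ((1 : G) • · : S → S) = LinearMap.id := by ext; simp
    rw [h, ExteriorAlgebra.map_id]
    rfl
  map_mul' g h := by
    have hgh : Finsupp.lmapDomain k k ((g * h) • · : S → S) =
        Finsupp.lmapDomain k k (g • ·) ∘ₗ Finsupp.lmapDomain k k (h • ·) := by
      ext
      simp [mul_smul]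
    rw [hgh, ← ExteriorAlgebra.map_comp_map]
    rfl

theorem exteriorRep_ι_mul (g : G) (v : S →₀ k) (w : ExteriorAlgebra k (S →₀ k)) :
    exteriorRep k S G g (ExteriorAlgebra.ι k v * w) =
      ExteriorAlgebra.ι k (v.mapDomain (g • ·)) * exteriorRep k S G g w := by
  simp [exteriorRep]

theorem exteriorRep_algebraMap (g : G) (r : k) :
    exteriorRep k S G g (algebraMap k _ r) = algebraMap k _ r := by
  simp [exteriorRep]

theorem exteriorRep_one (g : G) : exteriorRep k S G g 1 = 1 := by
  simp [exteriorRep]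

theorem exteriorRep_mul_wedge (g : G) (x : S) :
    exteriorRep k S G g * wedge k x = wedge k (g • x) * exteriorRep k S G g :=
  LinearMap.ext fun w ↦ by simp [wedge_apply, exteriorRep_ι_mul]

theorem exteriorRep_mul_contract (g : G) (x : S) :
    exteriorRep k S G g * contract k x = contract k (g • x) * exteriorRep k S G g := by
  refine LinearMap.ext fun w ↦ ?_
  simp only [Module.End.mul_apply]
  refine CliffordAlgebra.left_induction (Q := 0)
    (P := fun w ↦ exteriorRep k S G g (contract k x w) = contract k (g • x) (exteriorRep k S G g w))
    (fun r ↦ ?_) (fun u w hu hw ↦ ?_) (fun w v hw ↦ ?_) w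
  · exact (congrArg _ (contract_algebraMap x r)).trans <| (map_zero _).trans <|
      ((congrArg _ (exteriorRep_algebraMap g r)).trans (contract_algebraMap (g • x) r)).symm
  · simp only [map_add, hu, hw]
  · have hv := Finsupp.mapDomain_apply (MulAction.injective g) v x
    change exteriorRep k S G g (contract k x (ExteriorAlgebra.ι k v * w)) =
      contract k (g • x) (exteriorRep k S G g (ExteriorAlgebra.ι k v * w))
    rw [contract_ι_mul, exteriorRep_ι_mul, contract_ι_mul, hv, map_sub, map_smul,
      exteriorRep_ι_mul, hw]

theorem exteriorRep_mem_exteriorPower (g : G) {w : ExteriorAlgebra k (S →₀ k)}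
    (hw : w ∈ ⋀[k]^i (S →₀ k)) : exteriorRep k S G g w ∈ ⋀[k]^i (S →₀ k) := by
  induction i generalizing w with
  | zero =>
    obtain ⟨r, rfl⟩ := mem_exteriorPower_zero.1 hw
    exact mem_exteriorPower_zero.2 ⟨r, (exteriorRep_algebraMap g r).symm⟩
  | succ i ih =>
    refine exteriorPower_succ_le
      (P := (⋀[k]^(i + 1) (S →₀ k)).comap (exteriorRep k S G g)) (fun v w hw ↦ ?_) hw
    rw [Submodule.mem_comap, exteriorRep_ι_mul]
    exact ι_mul_mem_exteriorPower _ (ih hw)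

end ExteriorOperators

open TensorProduct

section IdealTensor

variable {k A : Type*} [CommRing k] [CommRing A] [Algebra k A] {L : Type*} [AddCommGroup L]
  [Module k L] {I I' : Ideal A}

variable (k L) in
/-- The image of `I ⊗ L` in `A ⊗ L`, for an ideal `I` of `A`. -/
def idealTensor (I : Ideal A) : Submodule k (A ⊗[k] L) :=
  LinearMap.range ((I.restrictScalars k).subtype.rTensor L)

theorem tmul_mem_idealTensor {a : A} (ha : a ∈ I) (l : L) : a ⊗ₜ l ∈ idealTensor k L I :=
  ⟨⟨a, ha⟩ ⊗ₜ l, rfl⟩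

theorem idealTensor_le {P : Submodule k (A ⊗[k] L)} (h : ∀ a ∈ I, ∀ l, a ⊗ₜ l ∈ P) :
    idealTensor k L I ≤ P := by
  rintro _ ⟨y, rfl⟩
  induction y with
  | zero => simp
  | tmul a l => exact h a a.2 l
  | add u v hu hv => simpa only [map_add] using add_mem hu hv

theorem idealTensor_mono (h : I ≤ I') : idealTensor k L I ≤ idealTensor k L I' :=
  idealTensor_le fun _ ha l ↦ tmul_mem_idealTensor (h ha) l

theorem idealTensor_bot : idealTensor k L (⊥ : Ideal A) = ⊥ :=
  eq_bot_iff.2 <| idealTensor_le fun a ha l ↦ by simp [(Ideal.mem_bot).1 ha]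

theorem map_mem_idealTensor {f : Module.End k A} (hf : ∀ a ∈ I, f a ∈ I') (g : Module.End k L)
    {u : A ⊗[k] L} (hu : u ∈ idealTensor k L I) :
    TensorProduct.map f g u ∈ idealTensor k L I' :=
  idealTensor_le (P := (idealTensor k L I').comap (TensorProduct.map f g))
    (fun a ha l ↦ tmul_mem_idealTensor (hf a ha) (g l)) hu

theorem mem_idealTensor_iff_rTensor_mkQ {u : A ⊗[k] L} :
    u ∈ idealTensor k L I ↔ (I.restrictScalars k).mkQ.rTensor L u = 0 :=
  (rTensor_exact L (LinearMap.exact_subtype_mkQ _) (Submodule.mkQ_surjective _) u).symm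

theorem mem_idealTensor_of_mul_mem [Module.Flat k L] {e : A} (he : ∀ a, e * a ∈ I → a ∈ I)
    {u : A ⊗[k] L} (h : (LinearMap.mulLeft k e).rTensor L u ∈ idealTensor k L I) :
    u ∈ idealTensor k L I := by
  let I₀ := I.restrictScalars k
  let μ : (A ⧸ I₀) →ₗ[k] A ⧸ I₀ :=
    I₀.mapQ I₀ (LinearMap.mulLeft k e) fun a ha ↦ I.mul_mem_left e ha
  have hμ : Function.Injective μ := by
    refine (injective_iff_map_eq_zero μ).2 fun a ha ↦ ?_
    obtain ⟨a, rfl⟩ := I₀.mkQ_surjective a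
    exact (Submodule.Quotient.mk_eq_zero I₀).2 (he a ((Submodule.Quotient.mk_eq_zero I₀).1 ha))
  have hcomp : I₀.mkQ ∘ₗ LinearMap.mulLeft k e = μ ∘ₗ I₀.mkQ := rfl
  rw [mem_idealTensor_iff_rTensor_mkQ] at h ⊢
  rw [← LinearMap.rTensor_comp_apply, hcomp, LinearMap.rTensor_comp_apply] at h
  exact (map_eq_zero_iff _ (Module.Flat.rTensor_preserves_injective_linearMap μ hμ)).1 h

end IdealTensor

section KoszulOperators

variable (k S F N : Type*) [CommRing k] [AddCommGroup F] [Module k F] [AddCommGroup N] [Module k N]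

/-- The underlying module of the complex: polynomials in commuting variables of degree two, tensored
with the exterior algebra on anticommuting variables of degree one and with a module of
coefficients. -/
def KoszulModule := MvPolynomial S k ⊗[k] (ExteriorAlgebra k (S →₀ k) ⊗[k] F)

noncomputable instance : AddCommGroup (KoszulModule k S F) :=
  inferInstanceAs (AddCommGroup (MvPolynomial S k ⊗[k] (ExteriorAlgebra k (S →₀ k) ⊗[k] F)))

noncomputable instance : Module k (KoszulModule k S F) :=
  inferInstanceAs (Module k (MvPolynomial S k ⊗[k] (ExteriorAlgebra k (S →₀ k) ⊗[k] F)))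

variable {k S F N}

/-- The pure tensors in `KoszulModule k S F`, as a trilinear map. -/
noncomputable def koszulTmul :
    MvPolynomial S k →ₗ[k] ExteriorAlgebra k (S →₀ k) →ₗ[k] F →ₗ[k] KoszulModule k S F where
  toFun a := (TensorProduct.mk k _ _).compr₂ (TensorProduct.mk k _ _ a)
  map_add' a a' := LinearMap.ext₂ fun w f ↦ TensorProduct.add_tmul a a' (w ⊗ₜ f)
  map_smul' r a := LinearMap.ext₂ fun w f ↦ TensorProduct.smul_tmul' r a (w ⊗ₜ f)

theorem koszulModule_hom_ext {P : Type*} [AddCommMonoid P] [Module k P]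
    {φ ψ : KoszulModule k S F →ₗ[k] P}
    (h : ∀ a w f, φ (koszulTmul a w f) = ψ (koszulTmul a w f)) : φ = ψ :=
  TensorProduct.ext_threefold' fun a w f ↦ h a w f

/-- The tensor product of operators on the three factors of `KoszulModule k S F`. -/
noncomputable def tensorOp : Module.End k (MvPolynomial S k) →ₗ[k]
    Module.End k (ExteriorAlgebra k (S →₀ k)) →ₗ[k] Module.End k F →ₗ[k]
      Module.End k (KoszulModule k S F) where
  toFun a := (TensorProduct.mapBilinear (.id k) _ _ _ _).compr₂
    (TensorProduct.mapBilinear (.id k) _ _ _ _ a)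
  map_add' a a' := LinearMap.ext₂ fun b c ↦ koszulModule_hom_ext fun p w f ↦
    TensorProduct.add_tmul (a p) (a' p) (b w ⊗ₜ c f)
  map_smul' r a := LinearMap.ext₂ fun b c ↦ koszulModule_hom_ext fun p w f ↦
    TensorProduct.smul_tmul' r (a p) (b w ⊗ₜ c f)

theorem tensorOp_tmul (a : Module.End k (MvPolynomial S k))
    (b : Module.End k (ExteriorAlgebra k (S →₀ k))) (c : Module.End k F) (p : MvPolynomial S k)
    (w : ExteriorAlgebra k (S →₀ k)) (f : F) :
    tensorOp a b c (koszulTmul p w f) = koszulTmul (a p) (b w) (c f) := rfl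

theorem tensorOp_one : tensorOp (k := k) (S := S) (F := F) 1 1 1 = 1 :=
  koszulModule_hom_ext fun _ _ _ ↦ rfl

theorem tensorOp_mul (a a' : Module.End k (MvPolynomial S k))
    (b b' : Module.End k (ExteriorAlgebra k (S →₀ k))) (c c' : Module.End k F) :
    tensorOp a b c * tensorOp a' b' c' = tensorOp (a * a') (b * b') (c * c') :=
  koszulModule_hom_ext fun _ _ _ ↦ rfl

theorem tensorOp_mul_anticomm {a a' : Module.End k (MvPolynomial S k)}
    {b b' : Module.End k (ExteriorAlgebra k (S →₀ k))} {c c' : Module.End k F} (ha : Commute a a')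
    (hb : b * b' = -(b' * b)) (hc : Commute c c') :
    tensorOp a b c * tensorOp a' b' c' = -(tensorOp a' b' c' * tensorOp a b c) := by
  simp only [tensorOp_mul, ha.eq, hb, hc.eq, map_neg, LinearMap.neg_apply]

variable [DecidableEq S] {p : ℕ} [NeZero p]

variable (k p N)

/-- The part of the differential that involves the coordinate `x` only. In that coordinate it is the
periodic resolution with differentials alternating between the difference operator and the norm. -/
noncomputable def koszulDiff (x : S) : Module.End k (KoszulModule k S ((S → ZMod p) → N)) :=
  tensorOp 1 (wedge k x) (coordinateOp N x (differenceMatrix k p)) +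
    tensorOp (mulX k x) (contract k x) (coordinateOp N x (normMatrix k p))

/-- The contracting homotopy in the coordinate `x`. -/
noncomputable def koszulHomotopy (x : S) : Module.End k (KoszulModule k S ((S → ZMod p) → N)) :=
  tensorOp 1 (contract k x) (coordinateOp N x (summationMatrix k p)) +
    tensorOp (divX k x) (wedge k x) (coordinateOp N x (Matrix.single (-1) 0 1))

/-- The projection onto the elements of degree zero in the coordinate `x`, followed by evaluation at
zero in that coordinate. -/
noncomputable def koszulProj (x : S) : Module.End k (KoszulModule k S ((S → ZMod p) → N)) :=
  tensorOp (modX k x) (contract k x * wedge k x) (coordinateOp N x (evalZeroMatrix k p))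

theorem koszulDiff_anticomm {x y : S} (h : x ≠ y) :
    koszulDiff k N p x * koszulDiff k N p y = -(koszulDiff k N p y * koszulDiff k N p x) := by
  have hwc : wedge k x * contract k y = -(contract k y * wedge k x) := by
    rw [contract_mul_wedge k h.symm, neg_neg]
  simp only [koszulDiff, add_mul, mul_add]
  rw [tensorOp_mul_anticomm (.one_left _) (wedge_mul_wedge k x y) (commute_coordinateOp h _ _),
    tensorOp_mul_anticomm (.one_left _) hwc (commute_coordinateOp h _ _),
    tensorOp_mul_anticomm (.one_right _) (contract_mul_wedge k h) (commute_coordinateOp h _ _),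
    tensorOp_mul_anticomm (commute_mulX k x y) (contract_mul_contract k x y)
      (commute_coordinateOp h _ _)]
  abel

theorem koszulHomotopy_mul_koszulDiff {x y : S} (h : x ≠ y) :
    koszulHomotopy k N p x * koszulDiff k N p y =
      -(koszulDiff k N p y * koszulHomotopy k N p x) := by
  have hwc : wedge k x * contract k y = -(contract k y * wedge k x) := by
    rw [contract_mul_wedge k h.symm, neg_neg]
  simp only [koszulDiff, koszulHomotopy, add_mul, mul_add]
  rw [tensorOp_mul_anticomm (.one_left _) (contract_mul_wedge k h) (commute_coordinateOp h _ _),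
    tensorOp_mul_anticomm (.one_left _) (contract_mul_contract k x y)
      (commute_coordinateOp h _ _),
    tensorOp_mul_anticomm (.one_right _) (wedge_mul_wedge k x y) (commute_coordinateOp h _ _),
    tensorOp_mul_anticomm (commute_divX_mulX k h) hwc (commute_coordinateOp h _ _)]
  abel

theorem koszulDiff_mul_self (x : S) : koszulDiff k N p x * koszulDiff k N p x = 0 := by
  simp only [koszulDiff, add_mul, mul_add, tensorOp_mul, wedge_mul_self, contract_mul_self,
    ← map_mul, differenceMatrix_mul_normMatrix, normMatrix_mul_differenceMatrix, map_zero,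
    LinearMap.zero_apply, add_zero]

theorem koszulDiff_mul_koszulHomotopy_add (x : S) :
    koszulDiff k N p x * koszulHomotopy k N p x + koszulHomotopy k N p x * koszulDiff k N p x =
      1 - koszulProj k N p x := by
  let e := contract k x * wedge k x
  let op := coordinateOp (k := k) (I := ZMod p) N x
  have hone : (1 : Module.End k (KoszulModule k S ((S → ZMod p) → N))) =
      tensorOp 1 (wedge k x * contract k x) (op (differenceMatrix k p * summationMatrix k p)) +
      tensorOp 1 (wedge k x * contract k x) (op (Matrix.single (-1) 0 1 * normMatrix k p)) +
      tensorOp 1 e 1 := by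
    rw [← map_add, ← map_add op, differenceMatrix_mul_summationMatrix_add, map_one op,
      ← LinearMap.add_apply, ← map_add, wedge_mul_contract_add, tensorOp_one]
  have hproj : koszulProj k N p x = tensorOp 1 e (op (evalZeroMatrix k p)) -
      tensorOp (mulX k x * divX k x) e (op (evalZeroMatrix k p)) := by
    rw [koszulProj, modX, map_sub, LinearMap.sub_apply, LinearMap.sub_apply]
  simp only [koszulDiff, koszulHomotopy, add_mul, mul_add, tensorOp_mul, wedge_mul_self,
    contract_mul_self, map_zero, LinearMap.zero_apply, add_zero, zero_add, one_mul, mul_one,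
    divX_mul_mulX, ← map_mul, summationMatrix_mul_differenceMatrix, normMatrix_mul_single]
  rw [hproj, hone, map_sub, map_one (coordinateOp N x), map_sub]
  abel

theorem commute_koszulProj (x y : S) : Commute (koszulProj k N p x) (koszulProj k N p y) := by
  obtain rfl | h := eq_or_ne x y
  · exact Commute.refl _
  · simp only [koszulProj, commute_iff_eq, tensorOp_mul, (commute_modX k x y).eq,
      (commute_contract_mul_wedge k x y).eq, (commute_coordinateOp h _ _).eq]

theorem sum_mul_self_of_anticomm {R ι : Type*} [NonUnitalNonAssocRing R] {f : ι → R}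
    (hf : ∀ i, f i * f i = 0) (hfg : ∀ i j, i ≠ j → f i * f j = -(f j * f i)) (s : Finset ι) :
    (∑ i ∈ s, f i) * ∑ i ∈ s, f i = 0 := by
  classical
  induction s using Finset.induction_on with
  | empty => simp
  | insert i s hi ih =>
    rw [Finset.sum_insert hi, add_mul, mul_add, mul_add, hf, ih, zero_add, add_zero, Finset.mul_sum,
      Finset.sum_mul, ← Finset.sum_add_distrib]
    refine Finset.sum_eq_zero fun j hj ↦ ?_
    rw [hfg i j (ne_of_mem_of_not_mem hj hi).symm, neg_add_cancel]

variable [Fintype S]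

theorem sum_koszulDiff_mul_self :
    (∑ x : S, koszulDiff k N p x) * ∑ x : S, koszulDiff k N p x = 0 :=
  sum_mul_self_of_anticomm (koszulDiff_mul_self k N p) (fun _ _ ↦ koszulDiff_anticomm k N p) _

theorem sum_koszulDiff_mul_koszulHomotopy_add (x : S) :
    (∑ y, koszulDiff k N p y) * koszulHomotopy k N p x +
      koszulHomotopy k N p x * ∑ y, koszulDiff k N p y = 1 - koszulProj k N p x := by
  rw [← koszulDiff_mul_koszulHomotopy_add, Finset.sum_mul, Finset.mul_sum,
    ← Finset.sum_add_distrib]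
  refine Finset.sum_eq_single x (fun y _ hy ↦ ?_) (by simp)
  rw [koszulHomotopy_mul_koszulDiff k N p hy.symm, add_neg_cancel]

end KoszulOperators

section KoszulDegree

open MvPolynomial

attribute [local instance] MvPolynomial.gradedAlgebra

variable (k S F : Type*) [CommRing k] [AddCommGroup F] [Module k F]

/-- The elements of total degree `m`, polynomial variables having degree two and exterior ones
degree one. -/
noncomputable def koszulDegree (m : ℕ) : Submodule k (KoszulModule k S F) :=
  Submodule.span k {u | ∃ α i, 2 * α + i = m ∧ ∃ a : MvPolynomial S k, a.IsHomogeneous α ∧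
    ∃ w ∈ ⋀[k]^i (S →₀ k), ∃ f, koszulTmul a w f = u}

variable {k} in
/-- The elements of `KoszulModule k S F` with polynomial coefficients in the ideal `I`. -/
noncomputable def koszulIdealPart (I : Ideal (MvPolynomial S k)) :
    Submodule k (KoszulModule k S F) :=
  idealTensor k (ExteriorAlgebra k (S →₀ k) ⊗[k] F) I

/-- The projection onto the elements of degree `m`. -/
noncomputable def koszulDegreeProj (m : ℕ) : Module.End k (KoszulModule k S F) :=
  ∑ α ∈ Finset.range (m / 2 + 1),
    tensorOp (homogeneousComponent α)
      (GradedAlgebra.proj (fun i ↦ ⋀[k]^i (S →₀ k)) (m - 2 * α)) 1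

variable {k S F}

/-- Multiplication by a polynomial. -/
noncomputable def koszulMul (e : MvPolynomial S k) : Module.End k (KoszulModule k S F) :=
  tensorOp (LinearMap.mulLeft k e) 1 1

theorem tmul_mem_koszulDegree {α i m : ℕ} (hm : 2 * α + i = m) {a : MvPolynomial S k}
    (ha : a.IsHomogeneous α) {w : ExteriorAlgebra k (S →₀ k)} (hw : w ∈ ⋀[k]^i (S →₀ k)) (f : F) :
    koszulTmul a w f ∈ koszulDegree k S F m :=
  Submodule.subset_span ⟨α, i, hm, a, ha, w, hw, f, rfl⟩

theorem koszulDegree_le {m : ℕ} {P : Submodule k (KoszulModule k S F)}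
    (h : ∀ α i, 2 * α + i = m → ∀ a : MvPolynomial S k, a.IsHomogeneous α →
      ∀ w ∈ ⋀[k]^i (S →₀ k), ∀ f, koszulTmul a w f ∈ P) : koszulDegree k S F m ≤ P := by
  refine Submodule.span_le.2 ?_
  rintro _ ⟨α, i, hm, a, ha, w, hw, f, rfl⟩
  exact h α i hm a ha w hw f

theorem koszulIdealPart_le {I : Ideal (MvPolynomial S k)} {P : Submodule k (KoszulModule k S F)}
    (h : ∀ a ∈ I, ∀ w f, koszulTmul a w f ∈ P) : koszulIdealPart S F I ≤ P :=
  idealTensor_le fun a ha l ↦ by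
    induction l with
    | zero => rw [TensorProduct.tmul_zero]; exact P.zero_mem
    | tmul w f => exact h a ha w f
    | add l l' hl hl' => rw [TensorProduct.tmul_add]; exact P.add_mem hl hl'

theorem koszulIdealPart_mono {I I' : Ideal (MvPolynomial S k)} (h : I ≤ I') :
    koszulIdealPart S F I ≤ koszulIdealPart S F I' :=
  idealTensor_mono h

theorem koszulIdealPart_bot : koszulIdealPart S F (⊥ : Ideal (MvPolynomial S k)) = ⊥ :=
  idealTensor_bot

theorem tmul_mem_koszulIdealPart {I : Ideal (MvPolynomial S k)} {a : MvPolynomial S k}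
    (ha : a ∈ I) (w : ExteriorAlgebra k (S →₀ k)) (f : F) :
    koszulTmul a w f ∈ koszulIdealPart S F I :=
  tmul_mem_idealTensor ha (w ⊗ₜ f)

theorem tensorOp_mem_koszulIdealPart {I I' : Ideal (MvPolynomial S k)}
    {a : Module.End k (MvPolynomial S k)} (ha : ∀ q ∈ I, a q ∈ I')
    (b : Module.End k (ExteriorAlgebra k (S →₀ k))) (c : Module.End k F)
    {u : KoszulModule k S F} (hu : u ∈ koszulIdealPart S F I) :
    tensorOp a b c u ∈ koszulIdealPart S F I' :=
  map_mem_idealTensor ha (TensorProduct.map b c) hu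

theorem koszulMul_mem_koszulIdealPart {I : Ideal (MvPolynomial S k)} {e : MvPolynomial S k}
    (he : e ∈ I) (u : KoszulModule k S F) : koszulMul e u ∈ koszulIdealPart S F I := by
  have h : (koszulIdealPart S F I).mkQ ∘ₗ koszulMul e = 0 :=
    koszulModule_hom_ext fun a w f ↦ (Submodule.Quotient.mk_eq_zero _).2
      (tmul_mem_koszulIdealPart (I.mul_mem_right a he) w f)
  exact (Submodule.Quotient.mk_eq_zero _).1 (LinearMap.congr_fun h u)

theorem koszulMul_mem_koszulDegree {e : MvPolynomial S k} {d m : ℕ} (he : e.IsHomogeneous d)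
    {u : KoszulModule k S F} (hu : u ∈ koszulDegree k S F m) :
    koszulMul e u ∈ koszulDegree k S F (m + 2 * d) :=
  koszulDegree_le (P := (koszulDegree k S F (m + 2 * d)).comap (koszulMul e))
    (fun α i hm _ ha _ hw f ↦
      tmul_mem_koszulDegree (α := d + α) (i := i) (by omega) (he.mul ha) hw f) hu

theorem koszulDegreeProj_tmul (m : ℕ) (a : MvPolynomial S k) (w : ExteriorAlgebra k (S →₀ k))
    (f : F) : koszulDegreeProj k S F m (koszulTmul a w f) =
      ∑ α ∈ Finset.range (m / 2 + 1), koszulTmul (homogeneousComponent α a)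
        (GradedAlgebra.proj (fun i ↦ ⋀[k]^i (S →₀ k)) (m - 2 * α) w) f := by
  simp only [koszulDegreeProj, LinearMap.sum_apply, tensorOp_tmul, Module.End.one_apply]

theorem koszulDegreeProj_apply {m : ℕ} {u : KoszulModule k S F} (hu : u ∈ koszulDegree k S F m) :
    koszulDegreeProj k S F m u = u := by
  refine koszulDegree_le (P := LinearMap.eqLocus (koszulDegreeProj k S F m) 1) ?_ hu
  rintro α i rfl a ha w hw f
  rw [LinearMap.mem_eqLocus, koszulDegreeProj_tmul, Module.End.one_apply,
    Finset.sum_eq_single_of_mem α (Finset.mem_range.2 (by omega)), homogeneousComponent_of_mem ha,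
    if_pos rfl, Nat.add_sub_cancel_left, GradedAlgebra.proj_apply,
    DirectSum.decompose_of_mem_same (fun i ↦ ⋀[k]^i (S →₀ k)) hw]
  intro β _ hβ
  rw [homogeneousComponent_of_mem ha, if_neg hβ]
  simp only [map_zero, LinearMap.zero_apply]

theorem koszulIdealPart_sup_span_singleton_le {I : Ideal (MvPolynomial S k)}
    (hI : I.IsHomogeneous (homogeneousSubmodule S k)) {e : MvPolynomial S k} {d : ℕ}
    (he : e.IsHomogeneous d) (m : ℕ) :
    koszulIdealPart S F (I ⊔ Ideal.span {e}) ≤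
      (koszulIdealPart S F I ⊔ (koszulDegree k S F m).map (koszulMul e)).comap
        (koszulDegreeProj k S F (m + 2 * d)) := by
  refine koszulIdealPart_le fun a ha w f ↦ ?_
  rw [Submodule.mem_comap, koszulDegreeProj_tmul]
  refine Submodule.sum_mem _ fun α hα ↦ ?_
  set w' := GradedAlgebra.proj (fun i ↦ ⋀[k]^i (S →₀ k)) (m + 2 * d - 2 * α) w
  have hw' : w' ∈ ⋀[k]^(m + 2 * d - 2 * α) (S →₀ k) := SetLike.coe_mem _
  obtain ⟨b, hb, _, hec, rfl⟩ := Submodule.mem_sup.1 ha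
  obtain ⟨c, rfl⟩ := Ideal.mem_span_singleton.1 hec
  rw [map_add, map_add, LinearMap.add_apply, LinearMap.add_apply]
  refine Submodule.add_mem_sup
    (tmul_mem_koszulIdealPart (homogeneousComponent_mem_of_mem hI hb α) w' f) ?_
  rcases lt_or_ge α d with hαd | hdα
  · rw [homogeneousComponent_mul_of_lt he hαd, map_zero, LinearMap.zero_apply,
      LinearMap.zero_apply]
    exact Submodule.zero_mem _
  · rw [homogeneousComponent_mul_of_le he hdα]
    have := Finset.mem_range.1 hα
    exact ⟨_, tmul_mem_koszulDegree (by omega) (homogeneousComponent_isHomogeneous (α - d) c) hw' f,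
      rfl⟩

theorem exists_sub_koszulMul_mem {I : Ideal (MvPolynomial S k)}
    (hI : I.IsHomogeneous (homogeneousSubmodule S k)) {e : MvPolynomial S k} {d m : ℕ}
    (he : e.IsHomogeneous d) {u : KoszulModule k S F} (hu : u ∈ koszulDegree k S F (m + 2 * d))
    (hue : u ∈ koszulIdealPart S F (I ⊔ Ideal.span {e})) :
    ∃ v ∈ koszulDegree k S F m, u - koszulMul e v ∈ koszulIdealPart S F I := by
  have h := koszulIdealPart_sup_span_singleton_le hI he m hue
  rw [Submodule.mem_comap, koszulDegreeProj_apply hu] at h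
  obtain ⟨y, hy, _, ⟨v, hv, rfl⟩, rfl⟩ := Submodule.mem_sup.1 h
  exact ⟨v, hv, by rwa [add_sub_cancel_right]⟩

theorem mem_koszulIdealPart_of_koszulMul_mem [Module.Flat k (ExteriorAlgebra k (S →₀ k) ⊗[k] F)]
    {I : Ideal (MvPolynomial S k)} {e : MvPolynomial S k} (he : ∀ a, e * a ∈ I → a ∈ I)
    {u : KoszulModule k S F} (h : koszulMul e u ∈ koszulIdealPart S F I) :
    u ∈ koszulIdealPart S F I := by
  have hmul : koszulMul e u =
      (LinearMap.mulLeft k e).rTensor (ExteriorAlgebra k (S →₀ k) ⊗[k] F) u :=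
    congrArg (fun g ↦ TensorProduct.map (LinearMap.mulLeft k e) g u) TensorProduct.map_id
  exact mem_idealTensor_of_mul_mem he (hmul ▸ h)

theorem koszulDegree_le_koszulIdealPart [Fintype S] {m : ℕ}
    (hm : 2 * (Fintype.card S * Fintype.card S) + Fintype.card S < m) :
    koszulDegree k S F m ≤ koszulIdealPart S F (esymmIdeal S k (Fintype.card S)) := by
  refine koszulDegree_le fun α i hαi a ha w hw f ↦ ?_
  rcases lt_or_ge (Fintype.card S) i with hi | hi
  · rw [exteriorPower_eq_bot hi, Submodule.mem_bot] at hw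
    simp only [hw, map_zero, LinearMap.zero_apply]
    exact Submodule.zero_mem _
  · exact tmul_mem_koszulIdealPart (mem_esymmIdeal_card (by omega) ha) w f

end KoszulDegree

section KoszulExactness

open MvPolynomial

variable {k S N : Type*} [CommRing k] {p : ℕ} [AddCommGroup N] [Module k N]

variable (k S N p) in
/-- The inclusion of `N` as the constant functions in degree zero. -/
noncomputable def koszulAugmentation : N →ₗ[k] KoszulModule k S ((S → ZMod p) → N) :=
  koszulTmul 1 1 ∘ₗ LinearMap.pi fun _ ↦ LinearMap.id

theorem koszulAugmentation_apply (x : N) :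
    koszulAugmentation k S N p x = koszulTmul 1 1 fun _ ↦ x := rfl

theorem koszulAugmentation_injective : Function.Injective (koszulAugmentation k S N p) := by
  let retraction : KoszulModule k S ((S → ZMod p) → N) →ₗ[k] N :=
    LinearMap.proj 0 ∘ₗ (TensorProduct.lid k _).toLinearMap ∘ₗ
      TensorProduct.map (aeval (fun _ : S ↦ (0 : k))).toLinearMap
        ((TensorProduct.lid k _).toLinearMap ∘ₗ
          TensorProduct.map ExteriorAlgebra.algebraMapInv.toLinearMap LinearMap.id)
  refine Function.LeftInverse.injective (g := retraction) fun x ↦ ?_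
  change aeval (fun _ ↦ (0 : k)) (1 : MvPolynomial S k) •
    ExteriorAlgebra.algebraMapInv (1 : ExteriorAlgebra k (S →₀ k)) • x = x
  rw [map_one, map_one, one_smul, one_smul]

theorem koszulDegree_zero_le {F : Type*} [AddCommGroup F] [Module k F] :
    koszulDegree k S F 0 ≤ LinearMap.range (koszulTmul 1 1) := by
  refine koszulDegree_le fun α i hm a ha w hw f ↦ ?_
  obtain ⟨rfl, rfl⟩ : α = 0 ∧ i = 0 := by omega
  obtain ⟨r, rfl⟩ := mem_exteriorPower_zero.1 hw
  rw [← totalDegree_zero_iff_isHomogeneous, totalDegree_eq_zero_iff_eq_C, ← algebraMap_eq] at ha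
  rw [ha, Algebra.algebraMap_eq_smul_one, Algebra.algebraMap_eq_smul_one]
  simp only [map_smul, LinearMap.smul_apply]
  exact Submodule.smul_mem _ _ (Submodule.smul_mem _ _ ⟨f, rfl⟩)

variable [DecidableEq S] [NeZero p] {m : ℕ}

theorem koszulDiff_mem_koszulDegree (x : S) {u : KoszulModule k S ((S → ZMod p) → N)}
    (hu : u ∈ koszulDegree k S _ m) : koszulDiff k N p x u ∈ koszulDegree k S _ (m + 1) := by
  refine koszulDegree_le (P := (koszulDegree k S _ (m + 1)).comap (koszulDiff k N p x)) ?_ hu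
  rintro α i rfl a ha w hw f
  rw [Submodule.mem_comap, koszulDiff, LinearMap.add_apply, tensorOp_tmul, tensorOp_tmul]
  refine add_mem (tmul_mem_koszulDegree rfl ha (wedge_mem_exteriorPower x hw) _) ?_
  cases i with
  | zero => simp only [contract_eq_zero x hw, map_zero, LinearMap.zero_apply, zero_mem]
  | succ i =>
    exact tmul_mem_koszulDegree (by omega) ((isHomogeneous_X k x).mul ha)
      (contract_mem_exteriorPower x hw) _

theorem koszulHomotopy_mem_koszulDegree (x : S) {u : KoszulModule k S ((S → ZMod p) → N)}
    (hu : u ∈ koszulDegree k S _ (m + 1)) : koszulHomotopy k N p x u ∈ koszulDegree k S _ m := by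
  refine koszulDegree_le (P := (koszulDegree k S _ m).comap (koszulHomotopy k N p x)) ?_ hu
  intro α i hm a ha w hw f
  rw [Submodule.mem_comap, koszulHomotopy, LinearMap.add_apply, tensorOp_tmul, tensorOp_tmul]
  refine add_mem ?_ ?_
  · cases i with
    | zero => simp only [contract_eq_zero x hw, map_zero, LinearMap.zero_apply, zero_mem]
    | succ i => exact tmul_mem_koszulDegree (by omega) ha (contract_mem_exteriorPower x hw) _
  · cases α with
    | zero => simp only [divX_eq_zero ha, map_zero, LinearMap.zero_apply, zero_mem]
    | succ α =>
      exact tmul_mem_koszulDegree (by omega) (isHomogeneous_divX ha x)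
        (wedge_mem_exteriorPower x hw) _

theorem koszulHomotopy_apply_of_mem_koszulDegree_zero (x : S)
    {u : KoszulModule k S ((S → ZMod p) → N)} (hu : u ∈ koszulDegree k S _ 0) :
    koszulHomotopy k N p x u = 0 := by
  refine koszulDegree_le (P := LinearMap.ker (koszulHomotopy k N p x)) ?_ hu
  intro α i hm a ha w hw f
  obtain ⟨rfl, rfl⟩ : α = 0 ∧ i = 0 := by omega
  simp only [LinearMap.mem_ker, koszulHomotopy, LinearMap.add_apply, tensorOp_tmul,
    contract_eq_zero x hw, divX_eq_zero ha, map_zero, LinearMap.zero_apply, add_zero]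

variable (k N p) in
/-- The product of the commuting projections `koszulProj` over the coordinates in `s`. -/
noncomputable def koszulProjOn (s : Finset S) :
    Module.End k (KoszulModule k S ((S → ZMod p) → N)) :=
  s.noncommProd (koszulProj k N p)
    (Pairwise.set_pairwise (fun x y _ ↦ commute_koszulProj k N p x y) _)

theorem koszulProjOn_empty : koszulProjOn k N p (∅ : Finset S) = 1 := Finset.noncommProd_empty _ _

theorem koszulProjOn_insert {s : Finset S} {x : S} (hx : x ∉ s) :
    koszulProjOn k N p (insert x s) = koszulProj k N p x * koszulProjOn k N p s :=
  Finset.noncommProd_insert_of_notMem _ _ _ _ hx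

theorem koszulProjOn_apply_eq_zero {s : Finset S} {x : S} (hx : x ∈ s)
    {u : KoszulModule k S ((S → ZMod p) → N)} (hu : koszulProj k N p x u = 0) :
    koszulProjOn k N p s u = 0 := by
  rw [koszulProjOn, ← Finset.noncommProd_erase_mul s hx, Module.End.mul_apply, hu, map_zero]

theorem koszulProjOn_tmul_one (s : Finset S) (f : (S → ZMod p) → N) :
    koszulProjOn k N p s (koszulTmul 1 1 f) = koszulTmul 1 1 fun ω ↦ f (s.piecewise 0 ω) := by
  induction s using Finset.induction_on with
  | empty => simp only [koszulProjOn_empty, Finset.piecewise_empty, Module.End.one_apply]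
  | insert x s hx ih =>
    rw [koszulProjOn_insert hx, Module.End.mul_apply, ih, koszulProj, tensorOp_tmul, modX_one,
      contract_mul_wedge_one]
    congr 1
    ext ω
    rw [coordinateOp_evalZeroMatrix, Finset.piecewise_insert,
      Finset.update_piecewise_of_notMem s _ _ hx, Pi.zero_apply]

variable [Fintype S]

theorem koszulProjOn_univ_apply {u : KoszulModule k S ((S → ZMod p) → N)}
    (hu : u ∈ koszulDegree k S _ (m + 1)) : koszulProjOn k N p Finset.univ u = 0 := by
  refine koszulDegree_le (P := LinearMap.ker (koszulProjOn k N p Finset.univ)) ?_ hu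
  intro α i hm a ha w hw f
  cases i with
  | succ i =>
    refine exteriorPower_succ_le_of_wedge_mem (P := LinearMap.ker
      (koszulProjOn k N p Finset.univ ∘ₗ (koszulTmul a).flip f)) (fun x w _ ↦ ?_) hw
    refine koszulProjOn_apply_eq_zero (Finset.mem_univ x) ?_
    rw [LinearMap.flip_apply, koszulProj, tensorOp_tmul, ← Module.End.mul_apply, mul_assoc,
      wedge_mul_self, mul_zero, LinearMap.zero_apply, map_zero, LinearMap.zero_apply]
  | zero =>
    rw [LinearMap.mem_ker, a.as_sum]
    simp only [map_sum, LinearMap.sum_apply]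
    refine Finset.sum_eq_zero fun b hb ↦ ?_
    obtain ⟨x, hx⟩ : ∃ x, b x ≠ 0 := by
      by_contra! h
      have hdeg := ha (mem_support_iff.1 hb)
      rw [show b = 0 from Finsupp.ext h, map_zero] at hdeg
      omega
    refine koszulProjOn_apply_eq_zero (Finset.mem_univ x) ?_
    rw [koszulProj, tensorOp_tmul, modX_monomial hx, map_zero, LinearMap.zero_apply,
      LinearMap.zero_apply]

variable (k S N p) in
/-- The differential of the complex. -/
noncomputable def koszulD : Module.End k (KoszulModule k S ((S → ZMod p) → N)) :=
  ∑ x, koszulDiff k N p x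

theorem koszulD_koszulD (u : KoszulModule k S ((S → ZMod p) → N)) :
    koszulD k S N p (koszulD k S N p u) = 0 :=
  LinearMap.congr_fun (sum_koszulDiff_mul_self k N p) u

theorem koszulD_mem_koszulDegree {u : KoszulModule k S ((S → ZMod p) → N)}
    (hu : u ∈ koszulDegree k S _ m) : koszulD k S N p u ∈ koszulDegree k S _ (m + 1) := by
  rw [koszulD, LinearMap.sum_apply]
  exact sum_mem fun x _ ↦ koszulDiff_mem_koszulDegree x hu

theorem koszulProj_add_koszulD_koszulHomotopy (x : S) {z : KoszulModule k S ((S → ZMod p) → N)}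
    (hz : koszulD k S N p z = 0) :
    koszulProj k N p x z + koszulD k S N p (koszulHomotopy k N p x z) = z := by
  have h := LinearMap.congr_fun (sum_koszulDiff_mul_koszulHomotopy_add k N p x) z
  rw [← koszulD, LinearMap.add_apply, Module.End.mul_apply, Module.End.mul_apply, hz, map_zero,
    add_zero, LinearMap.sub_apply, Module.End.one_apply] at h
  rw [h, add_sub_cancel]

theorem exists_koszulProjOn_add_koszulD_eq {z : KoszulModule k S ((S → ZMod p) → N)}
    (hz : z ∈ koszulDegree k S _ (m + 1)) (hdz : koszulD k S N p z = 0) (s : Finset S) :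
    ∃ w ∈ koszulDegree k S _ m, koszulProjOn k N p s z + koszulD k S N p w = z := by
  induction s using Finset.induction_on with
  | empty => exact ⟨0, zero_mem _, by rw [koszulProjOn_empty, map_zero, add_zero]; rfl⟩
  | insert x s hx ih =>
    obtain ⟨w, hw, hwz⟩ := ih
    have hproj : koszulProjOn k N p s z = z - koszulD k S N p w := eq_sub_of_add_eq hwz
    have hdegree : koszulProjOn k N p s z ∈ koszulDegree k S _ (m + 1) :=
      hproj ▸ sub_mem hz (koszulD_mem_koszulDegree hw)
    have hcocycle : koszulD k S N p (koszulProjOn k N p s z) = 0 := by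
      rw [hproj, map_sub, hdz, koszulD_koszulD, sub_zero]
    refine ⟨koszulHomotopy k N p x (koszulProjOn k N p s z) + w,
      add_mem (koszulHomotopy_mem_koszulDegree x hdegree) hw, ?_⟩
    rw [koszulProjOn_insert hx, Module.End.mul_apply, map_add, ← add_assoc,
      koszulProj_add_koszulD_koszulHomotopy x hcocycle, hwz]

theorem exists_koszulD_eq {z : KoszulModule k S ((S → ZMod p) → N)}
    (hz : z ∈ koszulDegree k S _ (m + 1)) (hdz : koszulD k S N p z = 0) :
    ∃ w ∈ koszulDegree k S _ m, koszulD k S N p w = z := by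
  obtain ⟨w, hw, hwz⟩ := exists_koszulProjOn_add_koszulD_eq hz hdz Finset.univ
  exact ⟨w, hw, by rwa [koszulProjOn_univ_apply hz, zero_add] at hwz⟩

theorem koszulProjOn_apply_of_mem_koszulDegree_zero {z : KoszulModule k S ((S → ZMod p) → N)}
    (hz : z ∈ koszulDegree k S _ 0) (hdz : koszulD k S N p z = 0) (s : Finset S) :
    koszulProjOn k N p s z = z := by
  induction s using Finset.induction_on with
  | empty => rw [koszulProjOn_empty, Module.End.one_apply]
  | insert x s hx ih =>
    rw [koszulProjOn_insert hx, Module.End.mul_apply, ih]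
    simpa only [koszulHomotopy_apply_of_mem_koszulDegree_zero x hz, map_zero, add_zero]
      using koszulProj_add_koszulD_koszulHomotopy x hdz

theorem range_koszulAugmentation :
    LinearMap.range (koszulAugmentation k S N p) =
      koszulDegree k S _ 0 ⊓ LinearMap.ker (koszulD k S N p) := by
  refine le_antisymm (le_inf ?_ ?_) fun z ⟨hz, hdz⟩ ↦ ?_
  · rintro _ ⟨x, rfl⟩
    exact tmul_mem_koszulDegree (mul_zero 2) (isHomogeneous_one S k)
      (mem_exteriorPower_zero.2 ⟨1, map_one _⟩) _
  · rintro _ ⟨x, rfl⟩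
    simp only [LinearMap.mem_ker, koszulD, koszulDiff, koszulAugmentation_apply,
      LinearMap.sum_apply, LinearMap.add_apply, tensorOp_tmul, coordinateOp_differenceMatrix_const,
      contract_one, map_zero, LinearMap.zero_apply, add_zero, Finset.sum_const_zero]
  · have hproj := koszulProjOn_apply_of_mem_koszulDegree_zero hz hdz Finset.univ
    obtain ⟨f, rfl⟩ := koszulDegree_zero_le hz
    rw [← hproj, koszulProjOn_tmul_one]
    exact ⟨f 0, by simp only [koszulAugmentation_apply, Finset.piecewise_univ]⟩

end KoszulExactness

section KoszulAction

open MvPolynomial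

variable {k G S F : Type*} [CommRing k] [Group G] [MulAction G S] [AddCommGroup F] [Module k F]

variable (S) in
/-- The action of `G` on `KoszulModule k S F` permuting the variables and acting on `F`. -/
noncomputable def koszulRep (σ : Representation k G F) :
    Representation k G (KoszulModule k S F) where
  toFun g := tensorOp (renameRep k S G g) (exteriorRep k S G g) (σ g)
  map_one' := by
    rw [map_one (renameRep k S G), map_one (exteriorRep k S G), map_one σ, tensorOp_one]
  map_mul' g h := by
    rw [map_mul (renameRep k S G), map_mul (exteriorRep k S G), map_mul σ, tensorOp_mul]

theorem koszulRep_apply (σ : Representation k G F) (g : G) :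
    koszulRep S σ g = tensorOp (renameRep k S G g) (exteriorRep k S G g) (σ g) := rfl

theorem koszulRep_mem_koszulDegree (σ : Representation k G F) (g : G) {m : ℕ}
    {u : KoszulModule k S F} (hu : u ∈ koszulDegree k S F m) :
    koszulRep S σ g u ∈ koszulDegree k S F m :=
  koszulDegree_le (P := (koszulDegree k S F m).comap (koszulRep S σ g))
    (fun _ _ hm _ ha _ hw _ ↦ tmul_mem_koszulDegree hm ha.rename_isHomogeneous
      (exteriorRep_mem_exteriorPower g hw) _) hu

theorem commute_koszulRep_koszulMul (σ : Representation k G F) (g : G) {e : MvPolynomial S k}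
    (he : rename (g • ·) e = e) : Commute (koszulRep S σ g) (koszulMul e) := by
  have hmul : renameRep k S G g * LinearMap.mulLeft k e =
      LinearMap.mulLeft k e * renameRep k S G g :=
    LinearMap.ext fun a ↦ by
      simp only [Module.End.mul_apply, LinearMap.mulLeft_apply, renameRep_apply, map_mul, he]
  rw [commute_iff_eq, koszulRep_apply, koszulMul, tensorOp_mul, tensorOp_mul, hmul, mul_one,
    one_mul, mul_one, one_mul]

theorem tensorOp_one_one_mem_koszulDegree (T : Module.End k F) {m : ℕ} {u : KoszulModule k S F}
    (hu : u ∈ koszulDegree k S F m) : tensorOp 1 1 T u ∈ koszulDegree k S F m :=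
  koszulDegree_le (P := (koszulDegree k S F m).comap (tensorOp 1 1 T))
    (fun _ _ hm _ ha _ hw f ↦ tmul_mem_koszulDegree hm ha hw (T f)) hu

theorem commute_tensorOp_one_one_koszulMul (T : Module.End k F) (e : MvPolynomial S k) :
    Commute (tensorOp 1 1 T) (koszulMul e) := by
  simp only [commute_iff_eq, koszulMul, tensorOp_mul, one_mul, mul_one]

theorem sum_koszulRep_mul_tensorOp [Fintype G] {σ : Representation k G F} {Θ : Module.End k F}
    (hΘ : ∑ g, σ g⁻¹ * Θ * σ g = 1) :
    ∑ g, koszulRep S σ g⁻¹ * tensorOp 1 1 Θ * koszulRep S σ g = 1 := by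
  simp only [koszulRep_apply, tensorOp_mul, mul_one, ← map_mul, inv_mul_cancel, map_one]
  rw [← map_sum, hΘ, tensorOp_one]

section Esymm

variable [Fintype S]

theorem rename_smul_esymm (g : G) (j : ℕ) :
    rename (g • · : S → S) (esymm S k j) = esymm S k j :=
  rename_esymm S k j (MulAction.toPerm g)

theorem esymmIdeal_le_comap_rename (g : G) (j : ℕ) :
    esymmIdeal S k j ≤ (esymmIdeal S k j).comap (rename (g • · : S → S)) := by
  refine Ideal.span_le.2 ?_
  rintro _ ⟨i, hi, rfl⟩
  simpa only [SetLike.mem_coe, Ideal.mem_comap, rename_smul_esymm] using esymm_mem_esymmIdeal hi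

theorem koszulRep_mem_koszulIdealPart (σ : Representation k G F) (g : G) {j : ℕ}
    {u : KoszulModule k S F} (hu : u ∈ koszulIdealPart S F (esymmIdeal S k j)) :
    koszulRep S σ g u ∈ koszulIdealPart S F (esymmIdeal S k j) := by
  have h : ∀ a ∈ esymmIdeal S k j, renameRep k S G g a ∈ esymmIdeal S k j := fun a ha ↦ by
    rw [renameRep_apply]
    exact esymmIdeal_le_comap_rename g j ha
  rw [koszulRep_apply]
  exact tensorOp_mem_koszulIdealPart h (exteriorRep k S G g) (σ g) hu

end Esymm

variable {N : Type*} [AddCommGroup N] [Module k N] {p : ℕ}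

theorem koszulRep_koszulAugmentation [MulAction G (S → ZMod p)] (ρ : Representation k G N) (g : G)
    (x : N) : koszulRep S (functionsRep ρ _) g (koszulAugmentation k S N p x) =
      koszulAugmentation k S N p (ρ g x) := by
  rw [koszulAugmentation_apply, koszulRep_apply, tensorOp_tmul, renameRep_apply, map_one,
    exteriorRep_one, koszulAugmentation_apply]
  rfl

variable [DecidableEq S] [NeZero p]

theorem commute_koszulMul_koszulDiff (e : MvPolynomial S k) (x : S) :
    Commute (koszulMul e) (koszulDiff k N p x) := by
  have hmul : LinearMap.mulLeft k e * mulX k x = mulX k x * LinearMap.mulLeft k e :=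
    LinearMap.ext fun a ↦ mul_left_comm e (X x) a
  simp only [commute_iff_eq, koszulMul, koszulDiff, mul_add, add_mul, tensorOp_mul, hmul, one_mul,
    mul_one]

theorem koszulRep_mul_koszulDiff [AffineFunctionAction G S (ZMod p)] (ρ : Representation k G N)
    (g : G) (x : S) :
    koszulRep S (functionsRep ρ _) g * koszulDiff k N p x =
      koszulDiff k N p (g • x) * koszulRep S (functionsRep ρ _) g := by
  simp only [koszulRep_apply, koszulDiff, mul_add, add_mul, tensorOp_mul, renameRep_mul_mulX,
    exteriorRep_mul_wedge, exteriorRep_mul_contract, one_mul, mul_one]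
  rw [AffineFunctionAction.functionsRep_mul_coordinateOp ρ (differenceMatrix_add_add k p),
    AffineFunctionAction.functionsRep_mul_coordinateOp ρ (fun _ _ _ ↦ rfl : ∀ c i l,
      normMatrix k p (i + c) (l + c) = normMatrix k p i l)]

variable [Fintype S]

theorem commute_koszulMul_koszulD (e : MvPolynomial S k) :
    Commute (koszulMul e) (koszulD k S N p) :=
  Commute.sum_right _ _ _ fun x _ ↦ commute_koszulMul_koszulDiff e x

theorem commute_koszulRep_koszulD [AffineFunctionAction G S (ZMod p)] (ρ : Representation k G N)
    (g : G) : Commute (koszulRep S (functionsRep ρ _) g) (koszulD k S N p) := by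
  rw [commute_iff_eq, koszulD, Finset.mul_sum, Finset.sum_mul]
  simp only [koszulRep_mul_koszulDiff]
  exact Equiv.sum_comp (MulAction.toPerm g)
    fun x ↦ koszulDiff k N p x * koszulRep S (functionsRep ρ _) g

theorem koszulD_mem_koszulIdealPart {I : Ideal (MvPolynomial S k)}
    {u : KoszulModule k S ((S → ZMod p) → N)} (hu : u ∈ koszulIdealPart S _ I) :
    koszulD k S N p u ∈ koszulIdealPart S _ I := by
  rw [koszulD, LinearMap.sum_apply]
  exact sum_mem fun x _ ↦ add_mem (tensorOp_mem_koszulIdealPart (fun _ ha ↦ ha) _ _ hu)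
    (tensorOp_mem_koszulIdealPart (fun _ ha ↦ I.mul_mem_left _ ha) _ _ hu)

end KoszulAction

section KoszulResolution

open MvPolynomial

variable {k G S N : Type*} [Field k] [Group G] [Fintype G] [MulAction G S] [Fintype S]
  [DecidableEq S] {p : ℕ} [NeZero p] [AffineFunctionAction G S (ZMod p)]
  [AddCommGroup N] [Module k N] [Module k[G] N] [IsScalarTower k k[G] N]

attribute [local instance] MvPolynomial.gradedAlgebra

variable (k G S N p) in
/-- The representation of `G` underlying the resolution `koszulResolution`. -/
noncomputable abbrev koszulFunctionsRep :
    Representation k G (KoszulModule k S ((S → ZMod p) → N)) :=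
  koszulRep S (functionsRep (Representation.ofModule' N) (S → ZMod p))

variable (N) in
/-- The resolution of `N` by `KoszulModule k S ((S → ZMod p) → N)`, on which the elementary
symmetric polynomials act as a regular sequence of equivariant chain endomorphisms. -/
noncomputable def koszulResolution {θ : (S → ZMod p) → k} (hθ : ∀ ω, ∑ g : G, θ (g • ω) = 1) :
    letI := moduleOfRepresentation (koszulFunctionsRep k G S N p)
    haveI := isScalarTower_moduleOfRepresentation (koszulFunctionsRep k G S N p)
    RegularResolution k G N (KoszulModule k S ((S → ZMod p) → N)) (Fintype.card S)
      (2 * (Fintype.card S * Fintype.card S) + Fintype.card S) (2 * · + 1) :=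
  let ρ := koszulFunctionsRep k G S N p
  letI := moduleOfRepresentation ρ
  haveI := isScalarTower_moduleOfRepresentation ρ
  have hsmul := single_one_smul_moduleOfRepresentation ρ
  let equivariant (T : Module.End k (KoszulModule k S ((S → ZMod p) → N)))
      (hT : ∀ g, Commute (ρ g) T) :=
    MonoidAlgebra.equivariantOfLinearOfComm T fun g u ↦ by
      rw [hsmul, hsmul]; exact (LinearMap.congr_fun (hT g) u).symm
  { degree m := MonoidAlgebra.submoduleOfSMulMem (koszulDegree k S _ m) fun g u hu ↦ by
      rw [MonoidAlgebra.of_apply, hsmul]; exact koszulRep_mem_koszulDegree _ g hu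
    d := equivariant (koszulD k S N p) (commute_koszulRep_koszulD _)
    c j := equivariant (koszulMul (esymm S k (j + 1)))
      fun g ↦ commute_koszulRep_koszulMul _ g (rename_smul_esymm g (j + 1))
    W j := MonoidAlgebra.submoduleOfSMulMem (koszulIdealPart S _ (esymmIdeal S k j))
      fun g u hu ↦ by rw [MonoidAlgebra.of_apply, hsmul]; exact koszulRep_mem_koszulIdealPart _ g hu
    d_d := koszulD_koszulD
    c_d _ := LinearMap.congr_fun (commute_koszulMul_koszulD _)
    d_mem_degree := koszulD_mem_koszulDegree
    c_mem_degree j _ _ := koszulMul_mem_koszulDegree (isHomogeneous_esymm S k (j + 1))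
    W_le_succ j := koszulIdealPart_mono (by rw [esymmIdeal_succ]; exact le_sup_left)
    d_mem_W := koszulD_mem_koszulIdealPart
    c_mem_W i j _ := tensorOp_mem_koszulIdealPart (fun _ ↦ Ideal.mul_mem_left _ _) _ _
    c_mem_W_succ j _ := koszulMul_mem_koszulIdealPart (esymm_mem_esymmIdeal j.lt_succ_self) _
    exists_sub_mem_W {j m u} hu huW :=
      exists_sub_koszulMul_mem (isHomogeneous_esymmIdeal S k j) (isHomogeneous_esymm S k (j + 1))
        hu (esymmIdeal_succ S k j ▸ huW)
    mem_W_of_c_mem hj _ := mem_koszulIdealPart_of_koszulMul_mem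
      fun _ ↦ mem_esymmIdeal_of_esymm_mul_mem hj
    degree_le_W hm := koszulDegree_le_koszulIdealPart hm
    W_zero := SetLike.ext fun u ↦ SetLike.ext_iff.1
      ((congrArg (koszulIdealPart S _) (esymmIdeal_zero S k)).trans koszulIdealPart_bot) u
    augmentation := MonoidAlgebra.equivariantOfLinearOfComm (koszulAugmentation k S N p)
      fun g x ↦ by rw [hsmul]; exact (koszulRep_koszulAugmentation (.ofModule' N) g x).symm
    augmentation_injective := koszulAugmentation_injective
    range_augmentation :=
      SetLike.ext fun u ↦ SetLike.ext_iff.1 (range_koszulAugmentation (k := k)) u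
    exists_d_eq := exists_koszulD_eq
    Θ := tensorOp 1 1 (mulPointwise N θ)
    sumOfConjugates_Θ := (sumOfConjugates_moduleOfRepresentation ρ _).trans
      (sum_koszulRep_mul_tensorOp (sum_functionsRep_mul_mulPointwise _ hθ))
    Θ_mem_degree := tensorOp_one_one_mem_koszulDegree _
    Θ_mem_W := tensorOp_mem_koszulIdealPart (fun _ ha ↦ ha) _ _
    Θ_c _ := LinearMap.congr_fun (commute_tensorOp_one_one_koszulMul _ _) }

theorem subsingleton_ext_of_affineFunctionAction {k G S : Type} [Field k] [Group G] [Fintype G]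
    [MulAction G S] [Fintype S] {p : ℕ} [NeZero p]
    [AffineFunctionAction G S (ZMod p)] {θ : (S → ZMod p) → k}
    (hθ : ∀ ω, ∑ g : G, θ (g • ω) = 1) {M N : ModuleCat.{v} k[G]} {a : ℕ}
    (h : ∀ i ≤ ∑ l ∈ Finset.range (Fintype.card S), (2 * l + 1),
      Subsingleton (Abelian.Ext.{v} M N (a + i + 1))) (m : ℕ) :
    Subsingleton (Abelian.Ext.{v} M N (m + 1)) := by
  classical
  let : Module k N := .compHom N (algebraMap k k[G])
  have : IsScalarTower k k[G] N := .of_algebraMap_smul fun _ _ ↦ rfl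
  let := moduleOfRepresentation (koszulFunctionsRep k G S N p)
  have := isScalarTower_moduleOfRepresentation (koszulFunctionsRep k G S N p)
  exact (koszulResolution N hθ).subsingleton_ext_of_consecutive M h m

end KoszulResolution

section Averaging

open MulAction

theorem exists_sum_smul_eq_one {k G Ω : Type*} [DivisionRing k] [Group G] [Fintype G]
    [MulAction G Ω] (h : ∀ ω : Ω, (Nat.card (stabilizer G ω) : k) ≠ 0) :
    ∃ θ : Ω → k, ∀ ω, ∑ g : G, θ (g • ω) = 1 := by
  classical
  let r (ω : Ω) : Ω := (Quotient.mk (orbitRel G Ω) ω).out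
  have hr (g : G) (ω : Ω) : r (g • ω) = r ω :=
    congrArg Quotient.out (Quotient.sound (s := orbitRel G Ω) ⟨g, rfl⟩)
  refine ⟨fun ω ↦ if ω = r ω then (Nat.card (stabilizer G ω) : k)⁻¹ else 0, fun ω ↦ ?_⟩
  obtain ⟨g₀, hg₀⟩ : ∃ g : G, g • ω = r ω := Quotient.mk_out (s := orbitRel G Ω) ω
  have hθ (g : G) : (if g • ω = r (g • ω) then (Nat.card (stabilizer G (g • ω)) : k)⁻¹ else 0) =
      if g * g₀⁻¹ ∈ stabilizer G (r ω) then (Nat.card (stabilizer G (r ω)) : k)⁻¹ else 0 := by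
    have hmem : g * g₀⁻¹ ∈ stabilizer G (r ω) ↔ g • ω = r ω := by
      rw [mem_stabilizer_iff, ← hg₀, mul_smul, inv_smul_smul, hg₀]
    rw [hr]
    exact if_ctx_congr hmem.symm (fun hg ↦ by rw [hmem.1 hg]) fun _ ↦ rfl
  calc
    _ = ∑ g, if g * g₀⁻¹ ∈ stabilizer G (r ω) then (Nat.card (stabilizer G (r ω)) : k)⁻¹ else 0 :=
      Finset.sum_congr rfl fun g _ ↦ hθ g
    _ = ∑ g, if g ∈ stabilizer G (r ω) then (Nat.card (stabilizer G (r ω)) : k)⁻¹ else 0 :=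
      Fintype.sum_equiv (Equiv.mulRight g₀⁻¹) _ _ fun _ ↦ rfl
    _ = 1 := by
      rw [← Finset.sum_filter, Finset.sum_const, nsmul_eq_mul, ← Fintype.card_subtype,
        ← Nat.card_eq_fintype_card]
      exact mul_inv_cancel₀ (h _)

end Averaging

section CyclicCosets

variable {G : Type*} [Group G]

/-- The affine action on functions given by translating the permutation action by a cocycle `κ`. -/
abbrev AffineFunctionAction.ofCocycle {S A : Type*} [MulAction G S] [AddCommGroup A]
    (κ : G → S → A) (hκ : ∀ g h x, κ (g * h) x = κ g (h • x) + κ h x) :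
    AffineFunctionAction G S A where
  smul g ω x := ω (g⁻¹ • x) + κ g (g⁻¹ • x)
  one_smul ω := funext fun x ↦ by
    have h1 : κ 1 x = 0 := by simpa using hκ 1 1 x
    change ω ((1 : G)⁻¹ • x) + κ 1 ((1 : G)⁻¹ • x) = ω x
    rw [inv_one, one_smul, h1, add_zero]
  mul_smul g h ω := funext fun x ↦ by
    change ω ((g * h)⁻¹ • x) + κ (g * h) ((g * h)⁻¹ • x) =
      ω (h⁻¹ • g⁻¹ • x) + κ h (h⁻¹ • g⁻¹ • x) + κ g (g⁻¹ • x)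
    rw [mul_inv_rev, mul_smul, hκ, smul_inv_smul, add_assoc, add_comm (κ g _)]
  smul_sub_smul g ω ω' x := by
    change ω (g⁻¹ • g • x) + _ - (ω' (g⁻¹ • g • x) + _) = _
    rw [inv_smul_smul, add_sub_add_right_eq_sub]

/-- The cocycle measuring the failure of the coset representatives `Quotient.out` to be
equivariant. -/
noncomputable def cosetCocycle (H : Subgroup G) (g : G) (x : G ⧸ H) : H :=
  ⟨(g • x).out⁻¹ * (g * x.out), by
    rw [← QuotientGroup.eq, QuotientGroup.out_eq', ← smul_eq_mul, MulAction.Quotient.mk_smul_out]⟩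

theorem cosetCocycle_mul (H : Subgroup G) (g h : G) (x : G ⧸ H) :
    cosetCocycle H (g * h) x = cosetCocycle H g (h • x) * cosetCocycle H h x :=
  Subtype.ext <| by simp only [cosetCocycle, Subgroup.coe_mul, mul_smul]; group

theorem eq_one_of_cosetCocycle_eq_one {H : Subgroup G} {g : G} {x : G ⧸ H} (hx : g • x = x)
    (h : cosetCocycle H g x = 1) : g = 1 := by
  have h' : (g • x).out⁻¹ * (g * x.out) = 1 := congrArg Subtype.val h
  rwa [hx, inv_mul_eq_one, eq_comm, mul_eq_right] at h'

variable (G) in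
/-- The disjoint union of the `G`-sets `G ⧸ ⟨h⟩`, for `h` of order `p`. -/
abbrev CyclicCosets (p : ℕ) := Σ h : {h : G // orderOf h = p}, G ⧸ Subgroup.zpowers h.1

/-- The identification of the subgroup generated by an element of order `p` with `ZMod p`. -/
noncomputable def zpowersLog {p : ℕ} (h : {h : G // orderOf h = p}) :
    Subgroup.zpowers h.1 ≃* Multiplicative (ZMod p) :=
  mulEquivOfCyclicCardEq (by rw [Nat.card_zpowers, h.2]; exact (Nat.card_zmod p).symm)

noncomputable instance (p : ℕ) : AffineFunctionAction G (CyclicCosets G p) (ZMod p) :=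
  .ofCocycle (fun g x ↦ (zpowersLog x.1 (cosetCocycle _ g x.2)).toAdd) fun g h x ↦ by
    change (zpowersLog x.1 (cosetCocycle _ (g * h) x.2)).toAdd =
      (zpowersLog x.1 (cosetCocycle _ g (h • x.2))).toAdd + _
    rw [cosetCocycle_mul, map_mul, toAdd_mul]

theorem eq_one_of_smul_eq_of_orderOf_eq {p : ℕ} {g : G} (hg : orderOf g = p)
    {ω : CyclicCosets G p → ZMod p} (h : g • ω = ω) : g = 1 := by
  let x : G ⧸ Subgroup.zpowers g := (1 : G)
  have hx : g • x = x := by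
    change ((g * 1 : G) : G ⧸ Subgroup.zpowers g) = (1 : G)
    simp [QuotientGroup.eq]
  have hωx : ω (g⁻¹ • ⟨⟨g, hg⟩, x⟩) + (zpowersLog ⟨g, hg⟩ (cosetCocycle _ g (g⁻¹ • x))).toAdd =
    ω ⟨⟨g, hg⟩, x⟩ := congrFun h ⟨⟨g, hg⟩, x⟩
  have hx' : g⁻¹ • (⟨⟨g, hg⟩, x⟩ : CyclicCosets G p) = ⟨⟨g, hg⟩, x⟩ :=
    inv_smul_eq_iff.2 (congrArg (Sigma.mk _) hx.symm)
  rw [hx', inv_smul_eq_iff.2 hx.symm, add_eq_left, toAdd_eq_zero, map_eq_one_iff _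
    (zpowersLog _).injective] at hωx
  exact eq_one_of_cosetCocycle_eq_one hx hωx

theorem card_stabilizer_ne_zero (k : Type*) [Field k] [Finite G] {p : ℕ} [ExpChar k p]
    (ω : CyclicCosets G p → ZMod p) : (Nat.card (MulAction.stabilizer G ω) : k) ≠ 0 := by
  cases ‹ExpChar k p› with
  | zero => exact Nat.cast_ne_zero.2 Nat.card_pos.ne'
  | prime hp =>
    have := Fact.mk hp
    rw [Ne, CharP.cast_eq_zero_iff k p]
    intro hdvd
    obtain ⟨⟨g, hg⟩, hgp⟩ := exists_prime_orderOf_dvd_card' p hdvd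
    rw [Subgroup.orderOf_mk] at hgp
    have hg1 := eq_one_of_smul_eq_of_orderOf_eq hgp (MulAction.mem_stabilizer_iff.1 hg)
    rw [hg1, orderOf_one] at hgp
    exact hp.one_lt.ne hgp

end CyclicCosets

/-- For a finite group `G` and a field `k` there is a positive integer `r`
(depending only on `G` and `k`) such that for all `kG`-modules `M`, `N`: if
`Ext^n_{kG}(M, N) = 0` for `r` consecutive positive values of `n`, then
`Ext^n_{kG}(M, N) = 0` for all `n > 0`. -/
theorem statement4 (k G : Type) [Field k] [Group G] [Finite G] :
    ∃ r : ℕ, 0 < r ∧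
      ∀ (M N : Type v) [AddCommGroup M] [Module (MonoidAlgebra k G) M]
        [AddCommGroup N] [Module (MonoidAlgebra k G) N],
        (∃ n₀ : ℕ, 0 < n₀ ∧ ∀ i < r,
          Subsingleton (((Ext ℤ (ModuleCat.{v} (MonoidAlgebra k G)) (n₀ + i)).obj
            (Opposite.op (ModuleCat.of (MonoidAlgebra k G) M))).obj
              (ModuleCat.of (MonoidAlgebra k G) N))) →
        ∀ n : ℕ, 0 < n →
          Subsingleton (((Ext ℤ (ModuleCat.{v} (MonoidAlgebra k G)) n).obj
            (Opposite.op (ModuleCat.of (MonoidAlgebra k G) M))).obj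
              (ModuleCat.of (MonoidAlgebra k G) N)) := by
  set p := ringExpChar k
  have : NeZero p := ⟨expChar_ne_zero k p⟩
  have := Fintype.ofFinite G
  have := Fintype.ofFinite (CyclicCosets G p)
  obtain ⟨θ, hθ⟩ := exists_sum_smul_eq_one (card_stabilizer_ne_zero (G := G) (p := p) k)
  refine ⟨∑ l ∈ Finset.range (Fintype.card (CyclicCosets G p)), (2 * l + 1) + 1, Nat.succ_pos _,
    fun M N _ _ _ _ ⟨n₀, hn₀, h⟩ n hn ↦ ?_⟩
  obtain ⟨a, rfl⟩ := Nat.exists_eq_succ_of_ne_zero hn₀.ne'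
  obtain ⟨m, rfl⟩ := Nat.exists_eq_succ_of_ne_zero hn.ne'
  rw [subsingleton_ext_obj_iff_abelianExt]
  refine subsingleton_ext_of_affineFunctionAction hθ (a := a) (fun i hi ↦ ?_) m
  rw [← subsingleton_ext_obj_iff_abelianExt ℤ, Nat.add_right_comm]
  exact h i (Nat.lt_succ_of_le hi)
end

section
/- Let K be a field of characteristic p > 0 and B = K[t]/(t^p). Let 0 → X → Y → Z → 0 be a short exact sequence of finite dimensional B-modules with Y projective. If dim_K Hom_B(X, K) − dim_K Hom_B(Y, K) + dim_K Hom_B(Z, K) = 0, where K = B/(t) is the one-dimensional B-module with t acting as 0, then the sequence splits and Z is a projective B-module. -/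
open Polynomial

/-- The composition length of a module (the length of a composition series,
zero if none exists). -/
noncomputable def compLength (R : Type) [Ring R] (M : Type) [AddCommGroup M] [Module R M] : ℕ := by
  classical
  exact if h : ∃ s : CompositionSeries (Submodule R M), s.head = ⊥ ∧ s.last = ⊤ then
    h.choose.length else 0

/-- The truncated polynomial algebra `B = K[t]/(t^p)`. -/
noncomputable abbrev Bp (K : Type) [Field K] (p : ℕ) : Type :=
  AdjoinRoot ((X : K[X]) ^ p)

/-- The algebra map `B → K` sending `t` to `0`, exhibiting `K = B/(t)` as a `B`-module. -/
noncomputable def resB (K : Type) [Field K] (p : ℕ) (hp : p ≠ 0) : Bp K p →ₐ[K] K :=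
  AdjoinRoot.liftAlgHom _ (Algebra.ofId K K) 0 (by simp [zero_pow hp])

/-!
For a ring `R` with a local homomorphism to a field `K`, `Hom_R(M, K)` is the `K`-dual of
`K ⊗[R] M`, whose dimension is that of `k ⊗[R] M` over the residue field `k` of `R`. As
`k ⊗[R] X → k ⊗[R] Y → k ⊗[R] Z → 0` is always exact, the dimension hypothesis says precisely that
`k ⊗[R] X → k ⊗[R] Y` is injective, and the local criterion then makes `Z` free.
For `R = K[t]/(t^p)`, the map `t ↦ 0` is local because a polynomial with nonzero constant term is coprime to `t^p`.
-/

section BaseChange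

open TensorProduct IsLocalRing Module

theorem injective_of_exact_of_finrank_add_eq {k U V W : Type*} [DivisionRing k]
    [AddCommGroup U] [Module k U] [Module.Finite k U]
    [AddCommGroup V] [Module k V] [Module.Finite k V] [AddCommGroup W] [Module k W]
    {f : U →ₗ[k] V} {g : V →ₗ[k] W} (hfg : Function.Exact f g) (hg : Function.Surjective g)
    (hdim : finrank k U + finrank k W = finrank k V) : Function.Injective f := by
  have rank_f := f.finrank_range_add_finrank_ker
  have rank_g := g.finrank_range_add_finrank_ker
  rw [hfg.linearMap_ker_eq, LinearMap.range_eq_top.2 hg, finrank_top] at rank_g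
  have ker_f : finrank k (LinearMap.ker f) = 0 := by lia
  exact LinearMap.ker_eq_bot.1 (Submodule.finrank_eq_zero.1 ker_f)

variable {R K : Type*} [CommRing R] [Field K] [Algebra R K]

theorem finrank_linearMap_eq_finrank_tensorProduct (M : Type*) [AddCommGroup M] [Module R M] :
    finrank K (M →ₗ[R] K) = finrank K (K ⊗[R] M) :=
  (LinearMap.liftBaseChangeEquiv K).finrank_eq.trans Subspace.dual_finrank_eq

variable [IsLocalHom (algebraMap R K)]

theorem finrank_tensorProduct_residueField [IsLocalRing R]
    (M : Type*) [AddCommGroup M] [Module R M] :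
    finrank (ResidueField R) (ResidueField R ⊗[R] M) = finrank K (K ⊗[R] M) := by
  let : Algebra (ResidueField R) K := (ResidueField.lift (algebraMap R K)).toAlgebra
  have : IsScalarTower R (ResidueField R) K := .of_algebraMap_eq fun _ => rfl
  exact finrank_baseChange.symm.trans
    (AlgebraTensorModule.cancelBaseChange R (ResidueField R) K K M).finrank_eq

theorem statement11_general {X Y Z : Type*} [AddCommGroup X] [Module R X] [Module.Finite R X]
    [AddCommGroup Y] [Module R Y] [Module.Finite R Y] [Module.Projective R Y]
    [AddCommGroup Z] [Module R Z] {f : X →ₗ[R] Y} {g : Y →ₗ[R] Z}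
    (hfg : Function.Exact f g) (hg : Function.Surjective g)
    (hdim : finrank K (X →ₗ[R] K) + finrank K (Z →ₗ[R] K) = finrank K (Y →ₗ[R] K)) :
    (∃ s : Z →ₗ[R] Y, g.comp s = LinearMap.id) ∧ Module.Free R Z := by
  have : IsLocalRing R := (algebraMap R K).domain_isLocalRing
  simp only [finrank_linearMap_eq_finrank_tensorProduct,
    ← finrank_tensorProduct_residueField (R := R) (K := K)] at hdim
  have injective_baseChange : Function.Injective (f.baseChange (ResidueField R)) :=
    injective_of_exact_of_finrank_add_eq (g := g.baseChange (ResidueField R))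
      (lTensor_exact _ hfg hg) (LinearMap.lTensor_surjective _ hg) hdim
  have : Module.Free R Y := free_of_flat_of_isLocalRing
  have free_Z : Module.Free R Z :=
    free_of_lTensor_residueField_injective f g hg hfg injective_baseChange
  exact ⟨projective_lifting_property g LinearMap.id hg, free_Z⟩

end BaseChange

theorem isUnit_mk_X_pow_of_coeff_zero_ne_zero {K : Type*} [Field K] (n : ℕ) {q : K[X]}
    (hq : q.coeff 0 ≠ 0) : IsUnit (AdjoinRoot.mk (X ^ n) q) := by
  have coprime_X : IsCoprime X q := irreducible_X.coprime_iff_not_dvd.2 (mt X_dvd_iff.1 hq)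
  obtain ⟨a, b, hab⟩ := coprime_X.pow_left (m := n)
  refine IsUnit.of_mul_eq_one_right (AdjoinRoot.mk _ b) ?_
  simpa using congrArg (AdjoinRoot.mk (X ^ n)) hab

theorem isLocalHom_resB (K : Type) [Field K] (p : ℕ) (hp : p ≠ 0) :
    IsLocalHom (resB K p hp).toRingHom where
  map_nonunit b hb := by
    obtain ⟨q, rfl⟩ := AdjoinRoot.mk_surjective b
    have resB_mk : resB K p hp (AdjoinRoot.mk _ q) = q.coeff 0 := by simp [resB]
    exact isUnit_mk_X_pow_of_coeff_zero_ne_zero p (resB_mk ▸ hb.ne_zero)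

/-- Over `B = K[t]/(t^p)`, a short exact sequence
`0 → X → Y → Z → 0` of finite dimensional `B`-modules with `Y` projective splits,
and `Z` is projective, as soon as
`dim_K Hom_B(X,K) - dim_K Hom_B(Y,K) + dim_K Hom_B(Z,K) = 0`. -/
theorem statement11 (K : Type) [Field K] (p : ℕ) [CharP K p] (hp : 0 < p)
    (X Y Z : Type) [AddCommGroup X] [Module (Bp K p) X]
    [AddCommGroup Y] [Module (Bp K p) Y] [AddCommGroup Z] [Module (Bp K p) Z]
    (hX : Module.Finite (Bp K p) X) (hY : Module.Finite (Bp K p) Y)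
    (hZ : Module.Finite (Bp K p) Z)
    (hYproj : Module.Projective (Bp K p) Y)
    (f : X →ₗ[Bp K p] Y) (g : Y →ₗ[Bp K p] Z)
    (hf : Function.Injective f) (hfg : Function.Exact f g) (hg : Function.Surjective g)
    (hdim :
      letI : Module (Bp K p) K := Module.compHom K (resB K p hp.ne').toRingHom
      haveI : SMulCommClass (Bp K p) K K :=
        ⟨fun b c x => by
          show resB K p hp.ne' b * (c * x) = c * (resB K p hp.ne' b * x); ring⟩
      Module.finrank K (X →ₗ[Bp K p] K) + Module.finrank K (Z →ₗ[Bp K p] K) =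
        Module.finrank K (Y →ₗ[Bp K p] K)) :
    (∃ s : Z →ₗ[Bp K p] Y, g.comp s = LinearMap.id) ∧
    Module.Projective (Bp K p) Z := by
  let := (resB K p hp.ne').toRingHom.toAlgebra
  have : IsLocalHom (algebraMap (Bp K p) K) := isLocalHom_resB K p hp.ne'
  obtain ⟨section_g, free_Z⟩ := statement11_general hfg hg hdim
  exact ⟨section_g, .of_free⟩
end

section
/- Let X be a T₀ topological space and P a set of closed subsets of X that contains the closure of {x} for every x ∈ X, partially ordered by inclusion. Call C ∈ P join irreducible if C is not equal to the union of the members of P that are properly contained in C. Then the assignment x ↦ closure({x}) is a bijection from X onto the set of join irreducible elements of P. -/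
/-- A member `C` of a family `P` of sets is join irreducible if it is not the union of
the members of `P` properly contained in it. -/
def JoinIrredMem {X : Type} (P : Set (Set X)) (C : Set X) : Prop :=
  C ∈ P ∧ C ≠ ⋃₀ {D | D ∈ P ∧ D ⊂ C}

/-!
A member `C` of `P` is join irreducible exactly when some point `x ∈ C` lies in no member of `P`
properly contained in `C`, that is, when `C` is minimal among the members of `P` containing some
`x`. The members of `P` containing `x` have a least one, namely `closure {x}`, so it is the only
minimal one. In a T₀ space a point is determined by its closure.
-/

theorem ne_sUnion_ssubset_iff {α : Type*} {P : Set (Set α)} {C : Set α} :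
    C ≠ ⋃₀ {D | D ∈ P ∧ D ⊂ C} ↔ ∃ x ∈ C, ∀ D ∈ P, D ⊂ C → x ∉ D := by
  have sUnion_subset : ⋃₀ {D | D ∈ P ∧ D ⊂ C} ⊆ C :=
    Set.sUnion_subset fun _ hD => hD.2.subset
  have ne_iff_not_subset : C ≠ ⋃₀ {D | D ∈ P ∧ D ⊂ C} ↔ ¬ C ⊆ ⋃₀ {D | D ∈ P ∧ D ⊂ C} :=
    not_congr ⟨fun h => h.subset, fun h => h.antisymm sUnion_subset⟩
  simp only [ne_iff_not_subset, Set.not_subset, Set.mem_sUnion, Set.mem_ofPred_eq, not_exists,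
    not_and, and_imp]

theorem joinIrredMem_iff_exists_minimal {X : Type} {P : Set (Set X)} {C : Set X} :
    JoinIrredMem P C ↔ ∃ x, Minimal (fun D => D ∈ P ∧ x ∈ D) C := by
  simp only [JoinIrredMem, ne_sUnion_ssubset_iff, Set.minimal_iff_forall_ssubset]
  constructor
  · rintro ⟨hC, x, hxC, hx⟩
    exact ⟨x, ⟨hC, hxC⟩, fun D hDC hD => hx D hD.1 hDC hD.2⟩
  · rintro ⟨x, ⟨hC, hxC⟩, hx⟩
    exact ⟨hC, x, hxC, fun D hD hDC hxD => hx hDC ⟨hD, hxD⟩⟩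

theorem isLeast_closure_singleton {X : Type*} [TopologicalSpace X] {P : Set (Set X)}
    (hP : ∀ C ∈ P, StableUnderSpecialization C) {x : X} (hx : closure {x} ∈ P) :
    IsLeast {C | C ∈ P ∧ x ∈ C} (closure {x}) :=
  ⟨⟨hx, subset_closure rfl⟩, fun C hC _ hy =>
    hP C hC.1 (specializes_iff_mem_closure.2 hy) hC.2⟩

theorem setOf_joinIrredMem_eq_range_closure {X : Type} [TopologicalSpace X] {P : Set (Set X)}
    (hP : ∀ C ∈ P, StableUnderSpecialization C) (hpt : ∀ x : X, closure {x} ∈ P) :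
    {C | JoinIrredMem P C} = Set.range fun x : X => closure {x} :=
  Set.ext fun _ => joinIrredMem_iff_exists_minimal.trans <| exists_congr fun x =>
    (isLeast_closure_singleton hP (hpt x)).minimal_iff.trans eq_comm

theorem closure_singleton_injective (X : Type*) [TopologicalSpace X] [T0Space X] :
    Function.Injective fun x : X => closure {x} :=
  fun _ _ h => (inseparable_iff_closure_eq.2 h).eq

theorem statement12_general (X : Type) [TopologicalSpace X] [T0Space X]
    (P : Set (Set X)) (hP : ∀ C ∈ P, StableUnderSpecialization C)
    (hpt : ∀ x : X, closure {x} ∈ P) :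
    Set.BijOn (fun x : X => closure {x}) Set.univ {C | JoinIrredMem P C} := by
  rw [setOf_joinIrredMem_eq_range_closure hP hpt, ← Set.image_univ]
  exact (closure_singleton_injective X).injOn.bijOn_image

/-- For a T₀ space `X` and a set `P` of closed subsets of `X` containing
all point closures, `x ↦ closure {x}` is a bijection from `X` onto the set of join
irreducible elements of `P`. -/
theorem statement12 (X : Type) [TopologicalSpace X] [T0Space X]
    (P : Set (Set X)) (hP : ∀ C ∈ P, IsClosed C)
    (hpt : ∀ x : X, closure {x} ∈ P) :
    Set.BijOn (fun x : X => closure {x}) Set.univ {C | JoinIrredMem P C} :=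
  statement12_general X P (fun C hC => (hP C hC).stableUnderSpecialization) hpt
end

section
/- Let k be a field of characteristic p > 0, G a finite group, K/k a field extension, B = K[t]/(t^p), and α : B → KG a K-algebra homomorphism with KG flat as a B-module via α. Then the kG-module Δ obtained by restricting the KG-module Hom_B(KG, K) along kG → KG is endofinite: Δ has finite composition length as a module over its endomorphism ring End_{kG}(Δ). -/
open Polynomial

/-- Base change of a `kG`-module `M` to a representation of `G` over `K`. -/
noncomputable def rhoK (k K G : Type) [Field k] [Field K] [Algebra k K] [Group G]
    (M : Type) [AddCommGroup M] [Module (MonoidAlgebra k G) M] :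
    Representation K G
      (TensorProduct k K (RestrictScalars k (MonoidAlgebra k G) M)) :=
  MonoidHom.comp
    (Module.End.baseChangeHom k K
      (RestrictScalars k (MonoidAlgebra k G) M)).toRingHom.toMonoidHom
    (Representation.ofModule M)

/-- The base-changed module `M ⊗_k K`, as a module over `KG = MonoidAlgebra K G`. -/
noncomputable abbrev MK (k K G : Type) [Field k] [Field K] [Algebra k K] [Group G]
    (M : Type) [AddCommGroup M] [Module (MonoidAlgebra k G) M] : Type :=
  (rhoK k K G M).asModule

/-- `χ_α(M) = dim_K Hom_B(α^*(M ⊗_k K), K)`, where `α^*` is restriction along `α`. -/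
noncomputable def chiAlpha (k K G : Type) [Field k] [Field K] [Algebra k K] [Group G]
    (p : ℕ) (hp : p ≠ 0) (α : Bp K p →ₐ[K] MonoidAlgebra K G)
    (M : Type) [AddCommGroup M] [Module (MonoidAlgebra k G) M] : ℕ :=
  letI : Module (Bp K p) (MK k K G M) := Module.compHom _ α.toRingHom
  letI : Module (Bp K p) K := Module.compHom K (resB K p hp).toRingHom
  haveI : SMulCommClass (Bp K p) K K :=
    ⟨fun b c x => by
      show resB K p hp b * (c * x) = c * (resB K p hp b * x); ring⟩
  Module.finrank K ((MK k K G M) →ₗ[Bp K p] K)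

/-- `M` belongs to `Thick(α)`: `M` is finite dimensional and `α^*(M ⊗_k K)` is a
projective `B`-module. -/
def MemThick (k K G : Type) [Field k] [Field K] [Algebra k K] [Group G]
    (p : ℕ) (α : Bp K p →ₐ[K] MonoidAlgebra K G)
    (M : Type) [AddCommGroup M] [Module (MonoidAlgebra k G) M] : Prop :=
  Module.Finite (MonoidAlgebra k G) M ∧
  (letI : Module (Bp K p) (MK k K G M) := Module.compHom _ α.toRingHom
   Module.Projective (Bp K p) (MK k K G M))

section
variable (K G : Type) [Field K] [Group G] (p : ℕ) (hp : p ≠ 0)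
  (α : Bp K p →ₐ[K] MonoidAlgebra K G)

/-- The coinduced module `Hom_B(KG, K)` (as a type). -/
noncomputable def CoInd : Type :=
  letI : Module (Bp K p) (MonoidAlgebra K G) := Module.compHom _ α.toRingHom
  letI : Module (Bp K p) K := Module.compHom K (resB K p hp).toRingHom
  MonoidAlgebra K G →ₗ[Bp K p] K

noncomputable instance : AddCommGroup (CoInd K G p hp α) :=
  letI : Module (Bp K p) (MonoidAlgebra K G) := Module.compHom _ α.toRingHom
  letI : Module (Bp K p) K := Module.compHom K (resB K p hp).toRingHom
  (inferInstance : AddCommGroup (MonoidAlgebra K G →ₗ[Bp K p] K))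

noncomputable instance : Module (Bp K p) (CoInd K G p hp α) :=
  letI : Module (Bp K p) (MonoidAlgebra K G) := Module.compHom _ α.toRingHom
  letI : Module (Bp K p) K := Module.compHom K (resB K p hp).toRingHom
  (inferInstance : Module (Bp K p) (MonoidAlgebra K G →ₗ[Bp K p] K))

end

section
variable (K G : Type) [Field K] [Group G] (p : ℕ) (hp : p ≠ 0)
  (α : Bp K p →ₐ[K] MonoidAlgebra K G)

/-- Right multiplication by `x` on `KG`, as a `B`-linear map. -/
noncomputable def rmulB (x : MonoidAlgebra K G) :
    letI : Module (Bp K p) (MonoidAlgebra K G) := Module.compHom _ α.toRingHom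
    MonoidAlgebra K G →ₗ[Bp K p] MonoidAlgebra K G :=
  letI : Module (Bp K p) (MonoidAlgebra K G) := Module.compHom _ α.toRingHom
  { toFun := fun y => y * x
    map_add' := fun a b => add_mul a b x
    map_smul' := fun b y => by
      show (α b * y) * x = α b * (y * x)
      rw [mul_assoc] }

/-- The action of `KG` on `Hom_B(KG, K)` given by `(x · f) y = f (y x)`,
as a ring homomorphism into the `B`-linear endomorphisms. -/
noncomputable def coindHom :
    MonoidAlgebra K G →+* Module.End (Bp K p) (CoInd K G p hp α) where
  toFun x :=
    letI : Module (Bp K p) (MonoidAlgebra K G) := Module.compHom _ α.toRingHom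
    letI : Module (Bp K p) K := Module.compHom K (resB K p hp).toRingHom
    { toFun := fun f =>
        (show MonoidAlgebra K G →ₗ[Bp K p] K from f).comp (rmulB K G p α x)
      map_add' := fun f g => LinearMap.add_comp _ _ _
      map_smul' := fun b f => LinearMap.smul_comp _ _ _ }
  map_one' := by
    letI : Module (Bp K p) (MonoidAlgebra K G) := Module.compHom _ α.toRingHom
    letI : Module (Bp K p) K := Module.compHom K (resB K p hp).toRingHom
    refine LinearMap.ext fun f => LinearMap.ext fun y => ?_
    show (show MonoidAlgebra K G →ₗ[Bp K p] K from f) (y * 1) =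
      (show MonoidAlgebra K G →ₗ[Bp K p] K from f) y
    rw [mul_one]
  map_mul' x₁ x₂ := by
    letI : Module (Bp K p) (MonoidAlgebra K G) := Module.compHom _ α.toRingHom
    letI : Module (Bp K p) K := Module.compHom K (resB K p hp).toRingHom
    refine LinearMap.ext fun f => LinearMap.ext fun y => ?_
    show (show MonoidAlgebra K G →ₗ[Bp K p] K from f) (y * (x₁ * x₂)) =
      (show MonoidAlgebra K G →ₗ[Bp K p] K from f) ((y * x₁) * x₂)
    rw [mul_assoc]
  map_zero' := by
    letI : Module (Bp K p) (MonoidAlgebra K G) := Module.compHom _ α.toRingHom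
    letI : Module (Bp K p) K := Module.compHom K (resB K p hp).toRingHom
    refine LinearMap.ext fun f => LinearMap.ext fun y => ?_
    show (show MonoidAlgebra K G →ₗ[Bp K p] K from f) (y * 0) = 0
    rw [mul_zero, map_zero]
  map_add' x₁ x₂ := by
    letI : Module (Bp K p) (MonoidAlgebra K G) := Module.compHom _ α.toRingHom
    letI : Module (Bp K p) K := Module.compHom K (resB K p hp).toRingHom
    refine LinearMap.ext fun f => LinearMap.ext fun y => ?_
    show (show MonoidAlgebra K G →ₗ[Bp K p] K from f) (y * (x₁ + x₂)) =
      (show MonoidAlgebra K G →ₗ[Bp K p] K from f) (y * x₁) +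
      (show MonoidAlgebra K G →ₗ[Bp K p] K from f) (y * x₂)
    rw [mul_add, map_add]

/-- The `KG`-module structure on the coinduced module `Hom_B(KG, K)`. -/
noncomputable instance : Module (MonoidAlgebra K G) (CoInd K G p hp α) :=
  Module.compHom _ (coindHom K G p hp α)

end

section
variable (k K G : Type) [Field k] [Field K] [Algebra k K] [Group G] (p : ℕ) (hp : p ≠ 0)
  (α : Bp K p →ₐ[K] MonoidAlgebra K G)

/-- The canonical ring homomorphism `kG → KG`. -/
noncomputable def kGMap : MonoidAlgebra k G →+* MonoidAlgebra K G :=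
  MonoidAlgebra.liftNCRingHom (algebraMap k (MonoidAlgebra K G)) (MonoidAlgebra.of K G)
    (fun x y => Algebra.commutes x _)

/-- The point module `Δ_G(α)`: the coinduced module `Hom_B(KG, K)` viewed as a
`kG`-module by restriction along `kG → KG`. -/
noncomputable instance deltaModule : Module (MonoidAlgebra k G) (CoInd K G p hp α) :=
  Module.compHom _ (kGMap k K G)

end

/-!
`KG` is finitely generated over `B`, so a `B`-linear map `KG → K` is determined by its values on
finitely many generators, and `Hom_B(KG, K)` embeds in a finite power of `K`. Hence it has finite
length over `B`. As `B` is commutative and acts by `kG`-linear endomorphisms, every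
`End_{kG}(Δ)`-submodule of `Δ` is a `B`-submodule, so the length can only drop.
-/

section FiniteLength

theorem isFiniteLength_of_tower (R : Type*) {S M : Type*} [Ring R] [Ring S] [AddCommGroup M]
    [Module R M] [Module S M] [SMul R S] [IsScalarTower R S M] (h : IsFiniteLength R M) :
    IsFiniteLength S M := by
  rw [isFiniteLength_iff_isNoetherian_isArtinian] at h ⊢
  exact ⟨isNoetherian_of_tower R h.1, isArtinian_of_tower R h.2⟩

theorem isFiniteLength_moduleEnd_of_smulCommClass (R S : Type*) {M : Type*} [Ring R] [Ring S]
    [AddCommGroup M] [Module R M] [Module S M] [SMulCommClass R S M] (h : IsFiniteLength S M) :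
    IsFiniteLength (Module.End R M) M :=
  isFiniteLength_of_tower S h

theorem isFiniteLength_pi {R ι M : Type*} [Ring R] [Finite ι] [AddCommGroup M] [Module R M]
    (h : IsFiniteLength R M) : IsFiniteLength R (ι → M) := by
  obtain ⟨_, _⟩ := isFiniteLength_iff_isNoetherian_isArtinian.mp h
  exact isFiniteLength_iff_isNoetherian_isArtinian.mpr ⟨inferInstance, inferInstance⟩

theorem isFiniteLength_linearMap {R M N : Type*} [CommRing R] [AddCommGroup M] [Module R M]
    [Module.Finite R M] [AddCommGroup N] [Module R N] (h : IsFiniteLength R N) :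
    IsFiniteLength R (M →ₗ[R] N) := by
  obtain ⟨s, hs⟩ := Module.Finite.fg_top (R := R) (M := M)
  let evalOnGenerators : (M →ₗ[R] N) →ₗ[R] (s → N) :=
    LinearMap.pi fun x ↦ LinearMap.applyₗ (x : M)
  have injective : Function.Injective evalOnGenerators := fun f g hfg ↦
    LinearMap.ext_on hs fun x hx ↦ congrFun hfg ⟨x, hx⟩
  exact (isFiniteLength_pi h).of_injective injective

theorem isFiniteLength_of_finiteDimensional (K : Type*) {M : Type*} [DivisionRing K]
    [AddCommGroup M] [Module K M] [FiniteDimensional K M] : IsFiniteLength K M :=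
  isFiniteLength_iff_isNoetherian_isArtinian.mpr ⟨inferInstance, inferInstance⟩

end FiniteLength

theorem isScalarTower_compHom {K B A M : Type*} [CommSemiring K] [Semiring B] [Algebra K B]
    [Semiring A] [Algebra K A] [AddCommMonoid M] [Module A M] [Module K M] [IsScalarTower K A M]
    (φ : B →ₐ[K] A) :
    let : Module B M := Module.compHom M φ.toRingHom
    IsScalarTower K B M := by
  let : Module B M := Module.compHom M φ.toRingHom
  have map_smul_smul (c : K) (b : B) (m : M) : φ (c • b) • m = c • φ b • m := by
    rw [map_smul, smul_assoc]
  exact ⟨map_smul_smul⟩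

section CoInd

variable (k K G : Type) [Field k] [Field K] [Algebra k K] [Group G] (p : ℕ) (hp : p ≠ 0)
  (α : Bp K p →ₐ[K] MonoidAlgebra K G)

instance : SMulCommClass (MonoidAlgebra k G) (Bp K p) (CoInd K G p hp α) :=
  ⟨fun x b f ↦ (coindHom K G p hp α (kGMap k K G x)).map_smul b f⟩

theorem isFiniteLength_coInd [Finite G] : IsFiniteLength (Bp K p) (CoInd K G p hp α) := by
  let : Module (Bp K p) (MonoidAlgebra K G) := Module.compHom _ α.toRingHom
  -- These precede the `B`-module structure on `K`, which would offer instance search a second,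
  -- coefficientwise action of `B` on `KG`.
  have : IsScalarTower K (Bp K p) (MonoidAlgebra K G) := isScalarTower_compHom α
  have : Module.Finite (Bp K p) (MonoidAlgebra K G) := .of_restrictScalars_finite K _ _
  let : Module (Bp K p) K := Module.compHom K (resB K p hp).toRingHom
  have : IsScalarTower K (Bp K p) K := isScalarTower_compHom (resB K p hp)
  have : IsFiniteLength (Bp K p) K :=
    isFiniteLength_of_tower K (isFiniteLength_of_finiteDimensional K)
  exact isFiniteLength_linearMap this

end CoInd

theorem statement15_general (k K G : Type) [Field k] [Field K] [Algebra k K] [Group G] [Finite G]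
    (p : ℕ) (hp : p ≠ 0) (α : Bp K p →ₐ[K] MonoidAlgebra K G) :
    IsFiniteLength (Module.End (MonoidAlgebra k G) (CoInd K G p hp α)) (CoInd K G p hp α) :=
  isFiniteLength_moduleEnd_of_smulCommClass (MonoidAlgebra k G) (Bp K p)
    (isFiniteLength_coInd K G p hp α)

/-- For a π-point `α` (a flat `K`-algebra map `K[t]/(t^p) → KG`), the point
module `Δ_G(α) = Hom_B(KG, K)`, viewed as a `kG`-module, is endofinite. -/
theorem statement15 (k K G : Type) [Field k] [Field K] [Algebra k K] [Group G] [Finite G]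
    (p : ℕ) [CharP k p] (hp : 0 < p)
    (α : Bp K p →ₐ[K] MonoidAlgebra K G)
    (hflat : letI : Module (Bp K p) (MonoidAlgebra K G) := Module.compHom _ α.toRingHom
      Module.Flat (Bp K p) (MonoidAlgebra K G)) :
    IsFiniteLength
      (Module.End (MonoidAlgebra k G) (CoInd K G p hp.ne' α))
      (CoInd K G p hp.ne' α) :=
  statement15_general k K G p hp.ne' α
end
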